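/- For every k ≥ 1 and every finite d ≥ 3: (a) W_opt(n, k, d) ≥ 4 for all n, and (b) there exists n (in fact n = k·d² works, realized by k copies of the rotated surface code) with W_opt(n, k, d) = 4. Hence the minimum over all blocklengths n of W_opt(n, k, d) equals 4. -/

import Mathlib

open scoped Classical

noncomputable section

/-- Pauli strings modulo phase, indexed by a finite type. -/
abbrev PauliT (ι : Type) : Type := ι → ZMod 2 × ZMod 2

abbrev Pauli (n : ℕ) : Type := PauliT (Fin n)

variable {ι : Type} [Fintype ι]

/-- Weight of a Pauli string. -/
def wt (v : PauliT ι) : ℕ := (Finset.univ.filter fun i => v i ≠ 0).card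

/-- Support of a Pauli string. -/
def suppF (v : PauliT ι) : Finset ι := Finset.univ.filter fun i => v i ≠ 0

/-- Symplectic form encoding commutation. -/
def sympl (u v : PauliT ι) : ZMod 2 :=
  ∑ i, ((u i).1 * (v i).2 + (u i).2 * (v i).1)

/-- `G` is a stabilizer group (isotropic subspace). -/
def IsStabilizer (G : Submodule (ZMod 2) (PauliT ι)) : Prop :=
  ∀ u ∈ G, ∀ v ∈ G, sympl u v = 0

/-- Membership in the symplectic dual `G^⊥`. -/
def inDual (G : Submodule (ZMod 2) (PauliT ι)) (v : PauliT ι) : Prop :=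
  ∀ g ∈ G, sympl v g = 0

/-- Distance: minimum weight of an element of `G^⊥ \ G`, `⊤` if none exists. -/
def distG (G : Submodule (ZMod 2) (PauliT ι)) : ℕ∞ :=
  sInf ((fun v => (wt v : ℕ∞)) '' {v | inDual G v ∧ v ∉ G})

/-- `g` is an `𝔽₂`-basis (indexed family) of `G`. -/
def IsBasisFam {r : ℕ} (G : Submodule (ZMod 2) (PauliT ι)) (g : Fin r → PauliT ι) : Prop :=
  LinearIndependent (ZMod 2) g ∧ Submodule.span (ZMod 2) (Set.range g) = G

/-- The weight of a stabilizer group: optimal maximum generator weight over bases. -/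
def Wgt (G : Submodule (ZMod 2) (PauliT ι)) : ℕ∞ :=
  ⨅ (r : ℕ) (g : Fin r → PauliT ι) (_ : IsBasisFam G g),
    Finset.univ.sup fun i => (wt (g i) : ℕ∞)

/-- Optimal weight over all `[[n,k,d]]` stabilizer codes. -/
def Wopt (n k : ℕ) (d : ℕ∞) : ℕ∞ :=
  ⨅ (G : Submodule (ZMod 2) (Pauli n))
    (_ : IsStabilizer G ∧ Module.finrank (ZMod 2) ↥G = n - k ∧ distG G = d),
    Wgt G

/-- Weight enumerator: number of elements of `G` of weight `j`. -/
def Aj (G : Submodule (ZMod 2) (PauliT ι)) (j : ℕ) : ℕ :=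
  Nat.card {g : PauliT ι // g ∈ G ∧ wt g = j}

/-- A weight-optimal generating set. -/
def IsWeightOptimalBasis {r : ℕ} (G : Submodule (ZMod 2) (PauliT ι))
    (g : Fin r → PauliT ι) : Prop :=
  IsBasisFam G g ∧ Monotone (fun i => wt (g i)) ∧
    ∀ h : Fin r → PauliT ι, IsBasisFam G h → Monotone (fun i => wt (h i)) →
      ∀ i, wt (g i) ≤ wt (h i)

/-- Set of average generator weights over all bases of `G`. -/
def WavgSet (G : Submodule (ZMod 2) (PauliT ι)) : Set ℚ :=
  {x | ∃ (r : ℕ) (g : Fin r → PauliT ι), IsBasisFam G g ∧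
        x = (∑ i, (wt (g i) : ℚ)) / (r : ℚ)}

/-- Splitting of Pauli strings along a bipartition given by a predicate. -/
def splitEquiv (p : ι → Prop) :
    PauliT ι ≃ₗ[ZMod 2] PauliT {x // p x} × PauliT {x // ¬ p x} :=
  (LinearEquiv.funCongrLeft (ZMod 2) (ZMod 2 × ZMod 2) (Equiv.sumCompl p)).trans
    (LinearEquiv.sumArrowLequivProdArrow _ _ _ _)

/-- Tensor product of subspaces along a bipartition. -/
def tensorAlong (p : ι → Prop)
    (GA : Submodule (ZMod 2) (PauliT {x // p x}))
    (GB : Submodule (ZMod 2) (PauliT {x // ¬ p x})) :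
    Submodule (ZMod 2) (PauliT ι) :=
  (GA.prod GB).comap (splitEquiv p).toLinearMap

/-- Decomposability as a tensor product over a nontrivial bipartition. -/
def Decomposable (G : Submodule (ZMod 2) (PauliT ι)) : Prop :=
  ∃ p : ι → Prop, (∃ x, p x) ∧ (∃ x, ¬ p x) ∧
    ∃ (GA : Submodule (ZMod 2) (PauliT {x // p x}))
      (GB : Submodule (ZMod 2) (PauliT {x // ¬ p x})),
      G = tensorAlong p GA GB

/-- Identification of `Pauli (n₁+n₂)` with `Pauli n₁ × Pauli n₂`. -/
def pauliSumEquiv (n₁ n₂ : ℕ) :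
    Pauli (n₁ + n₂) ≃ₗ[ZMod 2] Pauli n₁ × Pauli n₂ :=
  (LinearEquiv.funCongrLeft (ZMod 2) (ZMod 2 × ZMod 2) finSumFinEquiv).trans
    (LinearEquiv.sumArrowLequivProdArrow _ _ _ _)

/-- Tensor product of stabilizer subspaces on `n₁` and `n₂` qubits. -/
def tensorFin {n₁ n₂ : ℕ} (G₁ : Submodule (ZMod 2) (Pauli n₁))
    (G₂ : Submodule (ZMod 2) (Pauli n₂)) :
    Submodule (ZMod 2) (Pauli (n₁ + n₂)) :=
  (G₁.prod G₂).comap (pauliSumEquiv n₁ n₂).toLinearMap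

/-!
Lower bound. Suppose a code of distance at least `3` has generators of weight at most `3`. A
commuting Pauli string of weight at most `2` lies in the stabilizer, so among the generating sets
of weight at most `3` and bounded size, one of least total weight cannot be improved by exchanging
a generator for such a string. Let every generator split six units of charge equally among the
qubits of its support. A qubit receiving less than `6` is touched by exactly two generators; they
anticommute there, hence also at a second qubit, its partner. The exchange property bounds from
below the number of generators at a partner, so that its surplus pays for the deficits of all
qubits it is the partner of. Hence there are at least as many generators as qubits, whereas a code
with finite distance has fewer.

Upper bound. If a function on the grid is orthogonal to all faces of one colour of the
checkerboard, then the prefix sums of consecutive rows agree at every other position. In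
particular all row sums agree, and the prefix sums are the coefficients of an expansion into faces
of the other colour as soon as the row sums vanish. The row sum is thus the only obstruction to
being a stabilizer; if it is nonzero, the support meets all `d` rows.
-/

/-! ### The symplectic form -/

/-- The symplectic form of a single qubit; it is nonzero when two single-qubit Paulis
anticommute. -/
def localSympl (s t : ZMod 2 × ZMod 2) : ZMod 2 := s.1 * t.2 + s.2 * t.1

lemma localSympl_ne_zero_iff (s t : ZMod 2 × ZMod 2) :
    localSympl s t ≠ 0 ↔ s ≠ 0 ∧ t ≠ 0 ∧ s ≠ t := by
  revert s t; unfold localSympl; decide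

lemma localSympl_comm (s t : ZMod 2 × ZMod 2) : localSympl s t = localSympl t s := by
  unfold localSympl; ring

lemma localSympl_self (s : ZMod 2 × ZMod 2) : localSympl s s = 0 := by
  revert s; unfold localSympl; decide

lemma localSympl_zero_left (s : ZMod 2 × ZMod 2) : localSympl 0 s = 0 := by
  simp [localSympl]

lemma localSympl_zero_right (s : ZMod 2 × ZMod 2) : localSympl s 0 = 0 := by
  simp [localSympl]

lemma localSympl_add_left (s t u : ZMod 2 × ZMod 2) :
    localSympl (s + t) u = localSympl s u + localSympl t u := by
  simp only [localSympl, Prod.fst_add, Prod.snd_add]; ring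

lemma localSympl_add_right (s t u : ZMod 2 × ZMod 2) :
    localSympl s (t + u) = localSympl s t + localSympl s u := by
  simp only [localSympl, Prod.fst_add, Prod.snd_add]; ring

lemma localSympl_smul_left (c : ZMod 2) (s t : ZMod 2 × ZMod 2) :
    localSympl (c • s) t = c * localSympl s t := by
  simp only [localSympl, Prod.smul_fst, Prod.smul_snd, smul_eq_mul]; ring

lemma localSympl_eq_one {s t : ZMod 2 × ZMod 2} (h : localSympl s t ≠ 0) :
    localSympl s t = 1 :=
  Fin.eq_one_of_ne_zero _ h

lemma exists_localSympl_ne_zero {t : ZMod 2 × ZMod 2} (ht : t ≠ 0) :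
    ∃ s, localSympl s t ≠ 0 := by
  revert t; unfold localSympl; decide

lemma sympl_eq_sum (u v : PauliT ι) : sympl u v = ∑ i, localSympl (u i) (v i) := rfl

lemma sympl_comm (u v : PauliT ι) : sympl u v = sympl v u := by
  simp only [sympl_eq_sum, localSympl_comm]

lemma sympl_add_left (u v w : PauliT ι) : sympl (u + v) w = sympl u w + sympl v w := by
  simp only [sympl_eq_sum, Pi.add_apply, localSympl_add_left, Finset.sum_add_distrib]

lemma sympl_smul_left (c : ZMod 2) (u v : PauliT ι) : sympl (c • u) v = c * sympl u v := by
  simp only [sympl_eq_sum, Pi.smul_apply, localSympl_smul_left, Finset.mul_sum]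

lemma sympl_single_left (q : ι) (s : ZMod 2 × ZMod 2) (v : PauliT ι) :
    sympl (Pi.single q s) v = localSympl s (v q) := by
  rw [sympl_eq_sum, Finset.sum_eq_single q]
  · rw [Pi.single_eq_same]
  · intro b _ hb
    rw [Pi.single_eq_of_ne hb, localSympl_zero_left]
  · simp

variable (ι) in
/-- `sympl` as a bilinear form. -/
def symplForm : LinearMap.BilinForm (ZMod 2) (PauliT ι) :=
  LinearMap.mk₂ (ZMod 2) sympl sympl_add_left sympl_smul_left
    (fun u v w => by simp only [sympl_comm u, sympl_add_left])
    (fun c u v => by simp only [sympl_comm u, sympl_smul_left, smul_eq_mul])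

lemma symplForm_apply (u v : PauliT ι) : symplForm ι u v = sympl u v := rfl

lemma symplForm_nondegenerate : (symplForm ι).Nondegenerate := by
  have eq_zero_of_sympl (v : PauliT ι) (h : ∀ w, sympl w v = 0) : v = 0 := by
    funext q
    by_contra hq
    obtain ⟨s, hs⟩ := exists_localSympl_ne_zero hq
    exact hs ((sympl_single_left q s v).symm.trans (h _))
  refine ⟨fun v h => eq_zero_of_sympl v fun w => ?_, fun v h => eq_zero_of_sympl v h⟩
  rw [sympl_comm]
  exact h w

lemma sympl_eq_zero_of_mem_span {S : Set (PauliT ι)} {u v : PauliT ι}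
    (h : ∀ s ∈ S, sympl u s = 0) (hv : v ∈ Submodule.span (ZMod 2) S) : sympl u v = 0 :=
  (Submodule.span_le (p := LinearMap.ker (symplForm ι u))).2 h hv

lemma inDual_span_iff {S : Set (PauliT ι)} {v : PauliT ι} :
    inDual (Submodule.span (ZMod 2) S) v ↔ ∀ s ∈ S, sympl v s = 0 :=
  ⟨fun h s hs => h s (Submodule.subset_span hs), fun h _ hg => sympl_eq_zero_of_mem_span h hg⟩

lemma isStabilizer_span {S : Set (PauliT ι)} (h : ∀ s ∈ S, ∀ t ∈ S, sympl s t = 0) :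
    IsStabilizer (Submodule.span (ZMod 2) S) := by
  intro u hu v hv
  refine sympl_eq_zero_of_mem_span (fun t ht => ?_) hv
  rw [sympl_comm]
  exact sympl_eq_zero_of_mem_span (h t ht) hu

/-- The symplectic dual `G^⊥` as a subspace. -/
def symplDual (G : Submodule (ZMod 2) (PauliT ι)) : Submodule (ZMod 2) (PauliT ι) :=
  (symplForm ι).orthogonal G

lemma mem_symplDual {G : Submodule (ZMod 2) (PauliT ι)} {v : PauliT ι} :
    v ∈ symplDual G ↔ inDual G v := by
  rw [symplDual, LinearMap.BilinForm.mem_orthogonal_iff, inDual]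
  exact forall₂_congr fun g _ => by rw [sympl_comm]; rfl

lemma finrank_symplDual_add_finrank (G : Submodule (ZMod 2) (PauliT ι)) :
    Module.finrank (ZMod 2) (symplDual G) + Module.finrank (ZMod 2) G = 2 * Fintype.card ι := by
  have hpauli : Module.finrank (ZMod 2) (PauliT ι) = 2 * Fintype.card ι := by
    simp [Module.finrank_pi_fintype, mul_comm]
  rw [symplDual, LinearMap.BilinForm.finrank_orthogonal symplForm_nondegenerate, hpauli]
  exact Nat.sub_add_cancel (hpauli ▸ Submodule.finrank_le G)

lemma IsStabilizer.finrank_lt_card {G : Submodule (ZMod 2) (PauliT ι)} (hG : IsStabilizer G)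
    (hd : distG G ≠ ⊤) : Module.finrank (ZMod 2) G < Fintype.card ι := by
  obtain ⟨v, hv, hvG⟩ : ∃ v, inDual G v ∧ v ∉ G := by
    by_contra! h
    exact hd (sInf_eq_top.2 (by rintro _ ⟨v, hv, rfl⟩; exact absurd (h v hv.1) hv.2))
  have hlt : G < symplDual G :=
    lt_of_le_of_ne (fun u hu => mem_symplDual.2 (hG u hu)) fun h => hvG (h ▸ mem_symplDual.2 hv)
  have := Submodule.finrank_lt_finrank_of_lt hlt
  have := finrank_symplDual_add_finrank G
  omega

lemma wt_le_card_of_forall_eq_zero {v : PauliT ι} {T : Finset ι} (h : ∀ i ∉ T, v i = 0) :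
    wt v ≤ T.card :=
  Finset.card_le_card fun i hi => by_contra fun hiT => (Finset.mem_filter.1 hi).2 (h i hiT)

/-! ### Reduced generating sets -/

/-- The Pauli string acting as `s` on qubit `q` and as `t` on qubit `p`. -/
def twoSite (q p : ι) (s t : ZMod 2 × ZMod 2) : PauliT ι := Pi.single q s + Pi.single p t

lemma sympl_twoSite (q p : ι) (s t : ZMod 2 × ZMod 2) (v : PauliT ι) :
    sympl (twoSite q p s t) v = localSympl s (v q) + localSympl t (v p) := by
  rw [twoSite, sympl_add_left, sympl_single_left, sympl_single_left]

lemma wt_single_le (q : ι) (s : ZMod 2 × ZMod 2) : wt (Pi.single q s : PauliT ι) ≤ 1 :=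
  wt_le_card_of_forall_eq_zero (T := {q}) fun _ hi =>
    Pi.single_eq_of_ne (Finset.notMem_singleton.1 hi) _

lemma wt_twoSite_le (q p : ι) (s t : ZMod 2 × ZMod 2) : wt (twoSite q p s t) ≤ 2 := by
  refine (wt_le_card_of_forall_eq_zero (T := {q, p}) fun i hi => ?_).trans Finset.card_le_two
  simp only [Finset.mem_insert, Finset.mem_singleton, not_or] at hi
  simp [twoSite, hi.1, hi.2]

/-- A commuting generating set of weight at most three that no Pauli string of weight at most two
can improve: whenever `v` commutes with `S` and acts on qubit `q` by an operator anticommuting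
with `x`, some generator does so too and is no heavier than `v`. -/
structure IsWeightReduced (S : Finset (PauliT ι)) : Prop where
  commute : ∀ s ∈ S, ∀ t ∈ S, sympl s t = 0
  wt_le_three : ∀ s ∈ S, wt s ≤ 3
  exists_wt_le : ∀ v : PauliT ι, wt v ≤ 2 → (∀ s ∈ S, sympl v s = 0) →
    ∀ (x : ZMod 2 × ZMod 2) (q : ι), localSympl x (v q) ≠ 0 →
      ∃ F ∈ S, localSympl x (F q) ≠ 0 ∧ wt F ≤ wt v

lemma exists_span_insert_erase_eq {K V : Type*} [Field K] [AddCommGroup V] [Module K V]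
    [DecidableEq V] {S : Finset V} {v : V} (hv : v ∈ Submodule.span K (S : Set V)) (φ : V →ₗ[K] K)
    (hφ : φ v ≠ 0) :
    ∃ F ∈ S, φ F ≠ 0 ∧
      Submodule.span K (insert v (S.erase F) : Finset V) = Submodule.span K (S : Set V) := by
  obtain ⟨c, -, hc⟩ := Submodule.mem_span_finset.1 hv
  obtain ⟨F, hF, hcF⟩ : ∃ F ∈ S, c F * φ F ≠ 0 := by
    refine Finset.exists_ne_zero_of_sum_ne_zero ?_
    simpa only [← hc, map_sum, map_smul, smul_eq_mul] using hφ
  refine ⟨F, hF, right_ne_zero_of_mul hcF, le_antisymm ?_ ?_⟩ <;>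
    rw [Submodule.span_le]
  · intro s hs
    rcases Finset.mem_insert.1 (Finset.mem_coe.1 hs) with rfl | hs
    exacts [hv, Submodule.subset_span (Finset.mem_of_mem_erase hs)]
  · intro s hs
    by_cases hsF : s = F
    · have hsum : c F • F = v - ∑ t ∈ S.erase F, c t • t := by
        rw [← hc, ← Finset.add_sum_erase S _ hF, add_sub_cancel_right]
      rw [hsF, SetLike.mem_coe, ← Submodule.smul_mem_iff _ (left_ne_zero_of_mul hcF), hsum]
      exact sub_mem (Submodule.subset_span (Finset.mem_insert_self _ _))
        (sum_mem fun t ht => Submodule.smul_mem _ _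
          (Submodule.subset_span (Finset.mem_insert_of_mem ht)))
    · exact Submodule.subset_span (Finset.mem_insert_of_mem (Finset.mem_erase.2 ⟨hsF, hs⟩))

lemma sum_insert_erase_lt {α : Type*} [DecidableEq α] {S : Finset α} {f : α → ℕ} {v F : α}
    (hF : F ∈ S) (h : f v < f F) : ∑ s ∈ insert v (S.erase F), f s < ∑ s ∈ S, f s := by
  have := Finset.add_sum_erase S f hF
  by_cases hv : v ∈ S.erase F
  · rw [Finset.insert_eq_of_mem hv]; omega
  · rw [Finset.sum_insert hv]; omega

lemma exists_isWeightReduced {S₀ : Finset (PauliT ι)} (hcomm : ∀ s ∈ S₀, ∀ t ∈ S₀, sympl s t = 0)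
    (hwt : ∀ s ∈ S₀, wt s ≤ 3) (hdual : ∀ v : PauliT ι, wt v ≤ 2 → (∀ s ∈ S₀, sympl v s = 0) →
      v ∈ Submodule.span (ZMod 2) (S₀ : Set (PauliT ι))) :
    ∃ S : Finset (PauliT ι), IsWeightReduced S ∧ S.card ≤ S₀.card := by
  let G := Submodule.span (ZMod 2) (S₀ : Set (PauliT ι))
  let admissible : Set (Finset (PauliT ι)) :=
    {S | Submodule.span (ZMod 2) (S : Set (PauliT ι)) = G ∧ S.card ≤ S₀.card ∧ ∀ s ∈ S, wt s ≤ 3}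
  obtain ⟨S, ⟨hspan, hcard, hwtS⟩, hmin⟩ :=
    Set.exists_min_image admissible (fun S => ∑ s ∈ S, wt s) (Set.toFinite _)
      ⟨S₀, rfl, le_rfl, hwt⟩
  refine ⟨S, ⟨fun s hs t ht => ?_, hwtS, fun v hv hvS x q hx => ?_⟩, hcard⟩
  · exact isStabilizer_span hcomm s (hspan.le (Submodule.subset_span hs)) t
      (hspan.le (Submodule.subset_span ht))
  · have hvG : inDual G v := hspan ▸ inDual_span_iff.2 hvS
    have hvmem : v ∈ Submodule.span (ZMod 2) (S : Set (PauliT ι)) :=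
      hspan.ge (hdual v hv (inDual_span_iff.1 hvG))
    obtain ⟨F, hF, hxF, hexch⟩ := exists_span_insert_erase_eq hvmem
      (symplForm ι (Pi.single q x)) (by rwa [symplForm_apply, sympl_single_left])
    rw [symplForm_apply, sympl_single_left] at hxF
    refine ⟨F, hF, hxF, not_lt.1 fun hlt => ?_⟩
    refine (sum_insert_erase_lt hF hlt).not_ge (hmin _ ⟨hexch.trans hspan, ?_, ?_⟩)
    · exact (Finset.card_insert_le _ _).trans ((Finset.card_erase_add_one hF).le.trans hcard)
    · intro s hs
      rcases Finset.mem_insert.1 hs with rfl | hs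
      exacts [hv.trans (by norm_num), hwtS s (Finset.mem_of_mem_erase hs)]

/-! ### Qubits touched by two generators -/

/-- Qubit `q` is touched by exactly two generators `A` and `B`, which anticommute locally at `q`
and at a further qubit `p`, the partner of `q`. -/
structure IsPendant (S : Finset (PauliT ι)) (A B : PauliT ι) (q p : ι) : Prop where
  left_mem : A ∈ S
  right_mem : B ∈ S
  ne : q ≠ p
  anticomm : localSympl (A q) (B q) ≠ 0
  anticomm_partner : localSympl (A p) (B p) ≠ 0
  eq_or_eq : ∀ s ∈ S, s q ≠ 0 → s = A ∨ s = B

namespace IsPendant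

variable {S : Finset (PauliT ι)} {A B A' B' : PauliT ι} {q q' p p' r : ι}

section

omit [Fintype ι]

lemma symm (h : IsPendant S A B q p) : IsPendant S B A q p where
  left_mem := h.right_mem
  right_mem := h.left_mem
  ne := h.ne
  anticomm := localSympl_comm (A q) (B q) ▸ h.anticomm
  anticomm_partner := localSympl_comm (A p) (B p) ▸ h.anticomm_partner
  eq_or_eq s hs hq := (h.eq_or_eq s hs hq).symm

lemma generators_ne (h : IsPendant S A B q p) : A ≠ B := by
  rintro rfl
  exact h.anticomm (localSympl_self _)

lemma left_ne_zero (h : IsPendant S A B q p) : A q ≠ 0 :=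
  ((localSympl_ne_zero_iff _ _).1 h.anticomm).1

lemma left_partner_ne_zero (h : IsPendant S A B q p) : A p ≠ 0 :=
  ((localSympl_ne_zero_iff _ _).1 h.anticomm_partner).1

lemma apply_eq_zero (h : IsPendant S A B q p) {C : PauliT ι} (hC : C ∈ S) (hA : C ≠ A)
    (hB : C ≠ B) : C q = 0 := by
  by_contra hq
  exact (h.eq_or_eq C hC hq).elim hA hB

end

/-- A light commuting operator acting on `q` as something anticommuting with `A` can only be
matched by the generator `B`. -/
lemma right_wt_le (h : IsPendant S A B q p) (hS : IsWeightReduced S) {v : PauliT ι} (hv : wt v ≤ 2)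
    (hcomm : ∀ s ∈ S, sympl v s = 0) (hq : localSympl (A q) (v q) ≠ 0) : wt B ≤ 2 := by
  obtain ⟨F, hF, hAF, hwt⟩ := hS.exists_wt_le v hv hcomm (A q) q hq
  rcases h.eq_or_eq F hF ((localSympl_ne_zero_iff _ _).1 hAF).2.1 with rfl | rfl
  · exact absurd (localSympl_self _) hAF
  · exact hwt.trans hv

lemma exists_third (h : IsPendant S A B q p) (hS : IsWeightReduced S) (hB : wt B = 3)
    {y : ZMod 2 × ZMod 2} (hy : localSympl y (A p) ≠ 0) :
    ∃ C ∈ S, C ≠ A ∧ C ≠ B ∧ localSympl y (C p) ≠ 0 := by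
  by_contra! hcon
  have hAB := localSympl_eq_one h.anticomm
  have hBA := localSympl_comm (A q) (B q) ▸ hAB
  let x := localSympl y (B p) • A q + localSympl y (A p) • B q
  have hxA : localSympl x (A q) = localSympl y (A p) := by
    rw [localSympl_add_left, localSympl_smul_left, localSympl_smul_left, localSympl_self, hBA]
    ring
  have hxB : localSympl x (B q) = localSympl y (B p) := by
    rw [localSympl_add_left, localSympl_smul_left, localSympl_smul_left, localSympl_self, hAB]
    ring
  have hcomm : ∀ s ∈ S, sympl (twoSite q p x y) s = 0 := by
    intro s hs
    rw [sympl_twoSite]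
    by_cases hsA : s = A
    · rw [hsA, hxA, CharTwo.add_self_eq_zero]
    by_cases hsB : s = B
    · rw [hsB, hxB, CharTwo.add_self_eq_zero]
    rw [h.apply_eq_zero hs hsA hsB, localSympl_zero_right, hcon s hs hsA hsB, add_zero]
  have := h.right_wt_le hS (wt_twoSite_le q p x y) hcomm (by
    rwa [twoSite, Pi.add_apply, Pi.single_eq_same, Pi.single_eq_of_ne h.ne, add_zero,
      localSympl_comm, hxA])
  omega

lemma wt_le_two_of_shared (h : IsPendant S A B q p) (h' : IsPendant S A B' q' p') (hne : q ≠ q')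
    (hS : IsWeightReduced S) : wt B ≤ 2 := by
  have hqA : localSympl (B q) (A q) = 1 := localSympl_eq_one h.symm.anticomm
  have hqA' : localSympl (B' q') (A q') = 1 := localSympl_eq_one h'.symm.anticomm
  have commute_other {C : PauliT ι} {r r' : ι} (hC : IsPendant S A C r r') {s : PauliT ι}
      (hs : s ∈ S) (hsA : s ≠ A) : localSympl (C r) (s r) = 0 := by
    by_cases hsC : s = C
    · rw [hsC, localSympl_self]
    · rw [hC.apply_eq_zero hs hsA hsC, localSympl_zero_right]
  refine h.right_wt_le hS (wt_twoSite_le q q' (B q) (B' q')) (fun s hs => ?_) ?_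
  · rw [sympl_twoSite]
    by_cases hsA : s = A
    · rw [hsA, hqA, hqA', CharTwo.add_self_eq_zero]
    · rw [commute_other h hs hsA, commute_other h' hs hsA, add_zero]
  · rw [twoSite, Pi.add_apply, Pi.single_eq_same, Pi.single_eq_of_ne hne, add_zero]
    exact h.anticomm

end IsPendant

lemma eq_zero_of_wt_le_three {A : PauliT ι} (hA : wt A ≤ 3) {q p r i : ι} (hq : A q ≠ 0)
    (hp : A p ≠ 0) (hr : A r ≠ 0) (hqp : q ≠ p) (hqr : q ≠ r) (hpr : p ≠ r) (hiq : i ≠ q)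
    (hip : i ≠ p) (hir : i ≠ r) : A i = 0 := by
  by_contra hi
  have hsub : ({i, q, p, r} : Finset ι) ⊆ Finset.univ.filter fun j => A j ≠ 0 := by
    intro j hj
    simp only [Finset.mem_insert, Finset.mem_singleton] at hj
    rcases hj with rfl | rfl | rfl | rfl <;> simpa
  have hcard : ({i, q, p, r} : Finset ι).card = 4 := by simp [*]
  have : 4 ≤ wt A := hcard ▸ Finset.card_le_card hsub
  omega

lemma sympl_eq_sum_of_support_subset {u : PauliT ι} {T : Finset ι} (hu : ∀ i ∉ T, u i = 0)
    (v : PauliT ι) : sympl u v = ∑ i ∈ T, localSympl (u i) (v i) :=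
  (Finset.sum_subset (Finset.subset_univ T) fun i _ hi => by
    rw [hu i hi]; exact localSympl_zero_left _).symm

lemma exists_ne_localSympl_ne_zero {u v : PauliT ι} (h : sympl u v = 0) {q : ι}
    (hq : localSympl (u q) (v q) ≠ 0) : ∃ p, p ≠ q ∧ localSympl (u p) (v p) ≠ 0 := by
  by_contra! hcon
  refine hq ?_
  rwa [sympl_eq_sum, Finset.sum_eq_single q (fun i _ hi => hcon i hi) (by simp)] at h

namespace IsPendant

variable {S : Finset (PauliT ι)} {A B A' B' : PauliT ι} {q q' p p' r : ι}

lemma left_eq_zero_or_right_eq_zero (h : IsPendant S A B q p) (hS : IsWeightReduced S)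
    (hB : wt B = 3) (hrq : r ≠ q) (hrp : r ≠ p) : A r = 0 ∨ B r = 0 := by
  by_contra! ⟨hAr, hBr⟩
  have vanish {C D : PauliT ι} (hC : IsPendant S C D q p) (hCr : C r ≠ 0) {i : ι} (hiq : i ≠ q)
      (hip : i ≠ p) (hir : i ≠ r) : C i = 0 :=
    eq_zero_of_wt_le_three (hS.wt_le_three C hC.left_mem) hC.left_ne_zero
      hC.left_partner_ne_zero hCr hC.ne hrq.symm hrp.symm hiq hip hir
  have hcomm : localSympl (A r) (B r) = 0 := by
    have hAB := hS.commute A h.left_mem B h.right_mem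
    rw [sympl_eq_sum_of_support_subset (T := {q, p, r}) fun i hi => by
        simp only [Finset.mem_insert, Finset.mem_singleton, not_or] at hi
        exact vanish h hAr hi.1 hi.2.1 hi.2.2,
      Finset.sum_insert (by simp [h.ne, hrq.symm]), Finset.sum_pair hrp.symm,
      localSympl_eq_one h.anticomm, localSympl_eq_one h.anticomm_partner, ← add_assoc,
      CharTwo.add_self_eq_zero, zero_add] at hAB
    exact hAB
  have heq : A r = B r := by
    by_contra hne
    exact (localSympl_ne_zero_iff _ _).2 ⟨hAr, hBr, hne⟩ hcomm
  have hwt : wt (A + B) ≤ 2 := by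
    refine (wt_le_card_of_forall_eq_zero (T := {q, p}) fun i hi => ?_).trans Finset.card_le_two
    simp only [Finset.mem_insert, Finset.mem_singleton, not_or] at hi
    rw [Pi.add_apply]
    by_cases hir : i = r
    · rw [hir, heq, CharTwo.add_self_eq_zero]
    · rw [vanish h hAr hi.1 hi.2 hir, vanish h.symm hBr hi.1 hi.2 hir, add_zero]
  have := h.right_wt_le hS hwt
    (fun s hs => by rw [sympl_add_left, hS.commute A h.left_mem s hs,
      hS.commute B h.right_mem s hs, add_zero])
    (by rw [Pi.add_apply, localSympl_add_right, localSympl_self, zero_add]; exact h.anticomm)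
  omega

lemma localSympl_apply_eq_zero (h : IsPendant S A B q p) (hS : IsWeightReduced S) (hAr : A r ≠ 0)
    (hrq : r ≠ q) (hrp : r ≠ p) {C : PauliT ι} (hC : C ∈ S) (hCA : C ≠ A) (hCB : C ≠ B)
    (hCp : C p = 0) : localSympl (A r) (C r) = 0 := by
  have hAC := hS.commute A h.left_mem C hC
  rw [sympl_eq_sum, Finset.sum_eq_single r _ (by simp)] at hAC
  · exact hAC
  · intro i _ hir
    by_cases hiq : i = q
    · rw [hiq, h.apply_eq_zero hC hCA hCB, localSympl_zero_right]
    by_cases hip : i = p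
    · rw [hip, hCp, localSympl_zero_right]
    rw [eq_zero_of_wt_le_three (hS.wt_le_three A h.left_mem) h.left_ne_zero
      h.left_partner_ne_zero hAr h.ne hrq.symm hrp.symm hiq hip hir, localSympl_zero_left]

end IsPendant

/-- A pendant qubit both of whose generators have weight three. -/
structure IsHeavyPendant (S : Finset (PauliT ι)) (A B : PauliT ι) (q p : ι) : Prop
    extends IsPendant S A B q p where
  wt_left : wt A = 3
  wt_right : wt B = 3

namespace IsHeavyPendant

variable {S : Finset (PauliT ι)} {A B A' B' : PauliT ι} {q q' p : ι}

lemma symm (h : IsHeavyPendant S A B q p) : IsHeavyPendant S B A q p :=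
  ⟨h.toIsPendant.symm, h.wt_right, h.wt_left⟩

lemma left_ne_left (h : IsHeavyPendant S A B q p) (h' : IsHeavyPendant S A' B' q' p)
    (hne : q ≠ q') (hS : IsWeightReduced S) : A ≠ A' := by
  rintro rfl
  have := h.wt_le_two_of_shared h'.toIsPendant hne hS
  have := h.wt_right
  omega

lemma left_apply_other (h : IsHeavyPendant S A B q p) (h' : IsHeavyPendant S A' B' q' p)
    (hne : q ≠ q') (hS : IsWeightReduced S) : A q' = 0 :=
  h'.apply_eq_zero h.left_mem (h.left_ne_left h' hne hS) (h.left_ne_left h'.symm hne hS)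

lemma exists_fifth_of_anticomm (h : IsHeavyPendant S A B q p) (h' : IsHeavyPendant S A' B' q' p)
    (hne : q ≠ q') (hS : IsWeightReduced S) (hanti : localSympl (A p) (B' p) ≠ 0) :
    ∃ C ∈ S, C ≠ A ∧ C ≠ B ∧ C ≠ A' ∧ C ≠ B' ∧ C p ≠ 0 := by
  by_contra! hcon
  obtain ⟨r, hrp, hr⟩ :=
    exists_ne_localSympl_ne_zero (hS.commute A h.left_mem B' h'.right_mem) hanti
  obtain ⟨hAr, hBr', -⟩ := (localSympl_ne_zero_iff _ _).1 hr
  have hAq' : A q' = 0 := h.left_apply_other h' hne hS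
  have hBq' : B q' = 0 := h.symm.left_apply_other h' hne hS
  have hrq : r ≠ q := by
    rintro rfl
    exact hBr' (h'.symm.left_apply_other h hne.symm hS)
  have hrq' : r ≠ q' := by
    rintro rfl
    exact hAr hAq'
  have hBr : B r = 0 :=
    (h.left_eq_zero_or_right_eq_zero hS h.wt_right hrq hrp).resolve_left hAr
  have hAr' : A' r = 0 :=
    (h'.left_eq_zero_or_right_eq_zero hS h'.wt_right hrq' hrp).resolve_right hBr'
  have hcomm : ∀ s ∈ S, sympl (twoSite r q' (A r) (A' q')) s = 0 := by
    intro s hs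
    rw [sympl_twoSite]
    by_cases hsA : s = A
    · rw [hsA, hAq', localSympl_self, localSympl_zero_right, add_zero]
    by_cases hsB : s = B
    · rw [hsB, hBr, hBq', localSympl_zero_right, localSympl_zero_right, add_zero]
    by_cases hsA' : s = A'
    · rw [hsA', hAr', localSympl_self, localSympl_zero_right, add_zero]
    by_cases hsB' : s = B'
    · rw [hsB', localSympl_eq_one hr, localSympl_eq_one h'.anticomm, CharTwo.add_self_eq_zero]
    rw [h.localSympl_apply_eq_zero hS hAr hrq hrp hs hsA hsB (hcon s hs hsA hsB hsA' hsB'),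
      h'.apply_eq_zero hs hsA' hsB', localSympl_zero_right, add_zero]
  have := h'.symm.right_wt_le hS (wt_twoSite_le r q' (A r) (A' q')) hcomm (by
    rw [twoSite, Pi.add_apply, Pi.single_eq_same, Pi.single_eq_of_ne hrq'.symm, zero_add]
    exact h'.symm.anticomm)
  have := h'.wt_left
  omega

lemma exists_fifth (h : IsHeavyPendant S A B q p) (h' : IsHeavyPendant S A' B' q' p)
    (hne : q ≠ q') (hS : IsWeightReduced S) :
    ∃ C ∈ S, C ≠ A ∧ C ≠ B ∧ C ≠ A' ∧ C ≠ B' ∧ C p ≠ 0 := by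
  by_cases hanti : localSympl (A p) (B' p) ≠ 0
  · exact h.exists_fifth_of_anticomm h' hne hS hanti
  · have hanti' : localSympl (A p) (A' p) ≠ 0 := by
      have hA := h.left_partner_ne_zero
      have hA'B' := h'.anticomm_partner
      simp only [localSympl_ne_zero_iff, not_and, not_not] at *
      exact ⟨hA, hA'B'.1, fun heq => hA'B'.2.2 (heq ▸ hanti hA hA'B'.2.1)⟩
    obtain ⟨C, hC, hA, hB, hA', hB', hCp⟩ := h.exists_fifth_of_anticomm h'.symm hne hS hanti'
    exact ⟨C, hC, hA, hB, hB', hA', hCp⟩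

end IsHeavyPendant

/-! ### Discharging -/

/-- The generators in `S` acting nontrivially on qubit `q`. -/
def generatorsAt (S : Finset (PauliT ι)) (q : ι) : Finset (PauliT ι) := S.filter fun s => s q ≠ 0

/-- The total charge received by qubit `q` when each generator splits six units of charge equally
among the qubits of its support. In ℕ the shares are exact for the weights `1, 2, 3` at hand. -/
def load (S : Finset (PauliT ι)) (q : ι) : ℕ := ∑ s ∈ generatorsAt S q, 6 / wt s

omit [Fintype ι] in
lemma mem_generatorsAt {S : Finset (PauliT ι)} {q : ι} {s : PauliT ι} :
    s ∈ generatorsAt S q ↔ s ∈ S ∧ s q ≠ 0 := Finset.mem_filter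

lemma wt_pos {s : PauliT ι} {q : ι} (h : s q ≠ 0) : 0 < wt s :=
  Finset.card_pos.2 ⟨q, by simpa⟩

lemma sum_load_le (S : Finset (PauliT ι)) : ∑ q, load S q ≤ 6 * S.card := by
  simp only [load, generatorsAt, Finset.sum_filter]
  rw [Finset.sum_comm, mul_comm, ← smul_eq_mul, ← Finset.sum_const]
  refine Finset.sum_le_sum fun s _ => ?_
  rw [← Finset.sum_filter, Finset.sum_const, smul_eq_mul]
  exact Nat.mul_div_le 6 (wt s)

lemma two_le_wt_of_load_lt {S : Finset (PauliT ι)} {q : ι} (hq : load S q < 6) {s : PauliT ι}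
    (hs : s ∈ S) (hsq : s q ≠ 0) : 2 ≤ wt s := by
  by_contra! hlt
  have hshare : 6 / wt s ≤ load S q :=
    Finset.single_le_sum (f := fun s : PauliT ι => 6 / wt s) (fun _ _ => Nat.zero_le _)
      (mem_generatorsAt.2 ⟨hs, hsq⟩)
  have hwt : wt s = 1 := by have := wt_pos hsq; omega
  rw [hwt] at hshare
  omega

namespace IsWeightReduced

variable {S : Finset (PauliT ι)}

lemma two_le_share (hS : IsWeightReduced S) {s : PauliT ι} {q : ι}
    (hs : s ∈ generatorsAt S q) : 2 + (if wt s ≤ 2 then 1 else 0) ≤ 6 / wt s := by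
  rw [mem_generatorsAt] at hs
  have := wt_pos hs.2
  have := hS.wt_le_three s hs.1
  interval_cases wt s <;> simp

lemma le_load (hS : IsWeightReduced S) (q : ι) :
    2 * (generatorsAt S q).card + ((generatorsAt S q).filter fun s => wt s ≤ 2).card ≤
      load S q := by
  rw [Finset.card_filter, mul_comm, ← smul_eq_mul, ← Finset.sum_const, ← Finset.sum_add_distrib]
  exact Finset.sum_le_sum fun s hs => hS.two_le_share hs

lemma exists_anticomm (hS : IsWeightReduced S) {q : ι} (hq : load S q < 6)
    {x : ZMod 2 × ZMod 2} (hx : x ≠ 0) : ∃ s ∈ S, localSympl x (s q) ≠ 0 := by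
  by_contra! hcon
  obtain ⟨z, hz⟩ := exists_localSympl_ne_zero hx
  have hwt : wt (Pi.single q x : PauliT ι) ≤ 1 := wt_single_le q x
  obtain ⟨F, hF, hzF, hwtF⟩ := hS.exists_wt_le (Pi.single q x) (hwt.trans one_le_two)
    (fun s hs => by rw [sympl_single_left, hcon s hs]) z q (by rwa [Pi.single_eq_same])
  have := two_le_wt_of_load_lt hq hF ((localSympl_ne_zero_iff _ _).1 hzF).2.1
  omega

lemma exists_isPendant (hS : IsWeightReduced S) {q : ι} (hq : load S q < 6) :
    ∃ A B p, IsPendant S A B q p := by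
  obtain ⟨A, hA, hxA⟩ := hS.exists_anticomm hq (x := (1, 0)) (by decide)
  have hAq : A q ≠ 0 := ((localSympl_ne_zero_iff _ _).1 hxA).2.1
  obtain ⟨B, hB, hAB⟩ := hS.exists_anticomm hq hAq
  have hne : A ≠ B := by
    rintro rfl
    exact hAB (localSympl_self _)
  obtain ⟨p, hpq, hp⟩ := exists_ne_localSympl_ne_zero (hS.commute A hA B hB) hAB
  refine ⟨A, B, p, hA, hB, hpq.symm, hAB, hp, fun s hs hsq => ?_⟩
  by_contra! hcon
  have hsub : ({s, A, B} : Finset (PauliT ι)) ⊆ generatorsAt S q := by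
    intro t ht
    simp only [Finset.mem_insert, Finset.mem_singleton] at ht
    rcases ht with rfl | rfl | rfl
    exacts [mem_generatorsAt.2 ⟨hs, hsq⟩, mem_generatorsAt.2 ⟨hA, hAq⟩,
      mem_generatorsAt.2 ⟨hB, ((localSympl_ne_zero_iff _ _).1 hAB).2.1⟩]
  have hcard := Finset.card_le_card hsub
  rw [Finset.card_eq_three.2 ⟨s, A, B, hcon.1, hcon.2, hne, rfl⟩] at hcard
  have := hS.le_load q
  omega

end IsWeightReduced

/-- A pendant qubit with one generator of weight three and one of weight at most two. -/
structure IsLightPendant (S : Finset (PauliT ι)) (A B : PauliT ι) (q p : ι) : Prop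
    extends IsPendant S A B q p where
  wt_left : wt A = 3
  wt_right : wt B ≤ 2

section PendantsOfAPartner

variable {S : Finset (PauliT ι)} {A B : PauliT ι} {q p : ι}

lemma IsPendant.generatorsAt_eq (h : IsPendant S A B q p) : generatorsAt S q = {A, B} := by
  ext s
  rw [mem_generatorsAt, Finset.mem_insert, Finset.mem_singleton]
  refine ⟨fun hs => h.eq_or_eq s hs.1 hs.2, ?_⟩
  rintro (rfl | rfl)
  exacts [⟨h.left_mem, h.left_ne_zero⟩, ⟨h.right_mem, h.symm.left_ne_zero⟩]

lemma IsPendant.load_eq (h : IsPendant S A B q p) : load S q = 6 / wt A + 6 / wt B := by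
  rw [load, h.generatorsAt_eq, Finset.sum_pair h.generators_ne]

lemma IsWeightReduced.exists_heavy_or_light (hS : IsWeightReduced S) {q : ι}
    (hq : load S q < 6) :
    ∃ p, (load S q = 4 ∧ ∃ A B, IsHeavyPendant S A B q p) ∨
      (load S q = 5 ∧ ∃ A B, IsLightPendant S A B q p) := by
  obtain ⟨A, B, p, h⟩ := hS.exists_isPendant hq
  have hload := h.load_eq
  have hA2 := two_le_wt_of_load_lt hq h.left_mem h.left_ne_zero
  have hB2 := two_le_wt_of_load_lt hq h.right_mem h.symm.left_ne_zero
  have hA3 := hS.wt_le_three A h.left_mem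
  have hB3 := hS.wt_le_three B h.right_mem
  obtain hA | hA : wt A = 2 ∨ wt A = 3 := by omega
  all_goals obtain hB | hB : wt B = 2 ∨ wt B = 3 := by omega
  all_goals rw [hA, hB] at hload
  · omega
  · exact ⟨p, .inr ⟨hload, B, A, h.symm, hB, hA.le⟩⟩
  · exact ⟨p, .inr ⟨hload, A, B, h, hA, hB.le⟩⟩
  · exact ⟨p, .inl ⟨hload, A, B, h, hA, hB⟩⟩

variable (S) in
/-- The heavy pendant qubits with partner `p`. -/
def heavyAt (p : ι) : Finset ι := Finset.univ.filter fun q => ∃ A B, IsHeavyPendant S A B q p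

variable (S) in
/-- The light pendant qubits with partner `p`. -/
def lightAt (p : ι) : Finset ι := Finset.univ.filter fun q => ∃ A B, IsLightPendant S A B q p

lemma mem_heavyAt : q ∈ heavyAt S p ↔ ∃ A B, IsHeavyPendant S A B q p := by simp [heavyAt]

lemma mem_lightAt : q ∈ lightAt S p ↔ ∃ A B, IsLightPendant S A B q p := by simp [lightAt]

namespace IsWeightReduced

lemma card_lightAt_le (hS : IsWeightReduced S) (p : ι) :
    (lightAt S p).card ≤ ((generatorsAt S p).filter fun s => wt s ≤ 2).card := by
  refine Finset.card_le_card_of_forall_subsingleton (fun q s => s q ≠ 0) (fun q hq => ?_)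
    fun s hs => ?_
  · obtain ⟨A, B, h⟩ := mem_lightAt.1 hq
    exact ⟨B, Finset.mem_filter.2 ⟨mem_generatorsAt.2 ⟨h.right_mem, h.symm.left_partner_ne_zero⟩,
      h.wt_right⟩, h.symm.left_ne_zero⟩
  · rintro q ⟨hq, hsq⟩ q' ⟨hq', hsq'⟩
    obtain ⟨hs, hwt⟩ := Finset.mem_filter.1 hs
    have light_eq {q : ι} (hq : q ∈ lightAt S p) (hsq : s q ≠ 0) :
        ∃ A, IsLightPendant S A s q p := by
      obtain ⟨A, B, h⟩ := mem_lightAt.1 hq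
      obtain rfl | rfl := h.eq_or_eq s (mem_generatorsAt.1 hs).1 hsq
      · have := h.wt_left
        omega
      · exact ⟨A, h⟩
    obtain ⟨A, h⟩ := light_eq hq hsq
    obtain ⟨A', h'⟩ := light_eq hq' hsq'
    by_contra hne
    have := h.symm.wt_le_two_of_shared h'.symm hne hS
    have := h.wt_left
    omega

lemma two_mul_card_heavyAt_le (hS : IsWeightReduced S) (p : ι) :
    2 * (heavyAt S p).card ≤ (generatorsAt S p).card := by
  have hdisj : ((heavyAt S p : Finset ι) : Set ι).PairwiseDisjoint (generatorsAt S) := by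
    intro q hq q' hq' hne
    obtain ⟨A, B, h⟩ := mem_heavyAt.1 hq
    obtain ⟨A', B', h'⟩ := mem_heavyAt.1 hq'
    simp only [Function.onFun, h.generatorsAt_eq, h'.generatorsAt_eq, Finset.disjoint_insert_left,
      Finset.disjoint_singleton_left, Finset.mem_insert, Finset.mem_singleton, not_or]
    exact ⟨⟨h.left_ne_left h' hne hS, h.left_ne_left h'.symm hne hS⟩,
      h.symm.left_ne_left h' hne hS, h.symm.left_ne_left h'.symm hne hS⟩
  have hcard : ∑ q ∈ heavyAt S p, (generatorsAt S q).card = 2 * (heavyAt S p).card := by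
    rw [Finset.sum_const_nat (m := 2), mul_comm]
    intro q hq
    obtain ⟨A, B, h⟩ := mem_heavyAt.1 hq
    rw [h.generatorsAt_eq, Finset.card_pair h.generators_ne]
  rw [← hcard, ← Finset.card_biUnion hdisj]
  refine Finset.card_le_card (Finset.biUnion_subset.2 fun q hq => ?_)
  obtain ⟨A, B, h⟩ := mem_heavyAt.1 hq
  rw [h.generatorsAt_eq, Finset.insert_subset_iff, Finset.singleton_subset_iff, mem_generatorsAt,
    mem_generatorsAt]
  exact ⟨⟨h.left_mem, h.left_partner_ne_zero⟩, h.right_mem, h.symm.left_partner_ne_zero⟩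

end IsWeightReduced

lemma IsPendant.three_le_card_generatorsAt (h : IsPendant S A B q p) (hS : IsWeightReduced S)
    (hA : wt A = 3) : 3 ≤ (generatorsAt S p).card := by
  obtain ⟨C, hC, hCB, hCA, hCp⟩ := h.symm.exists_third hS hA h.anticomm_partner
  rw [← Finset.card_eq_three.2 ⟨C, A, B, hCA, hCB, h.generators_ne, rfl⟩]
  refine Finset.card_le_card fun s hs => mem_generatorsAt.2 ?_
  simp only [Finset.mem_insert, Finset.mem_singleton] at hs
  rcases hs with rfl | rfl | rfl
  exacts [⟨hC, ((localSympl_ne_zero_iff _ _).1 hCp).2.1⟩, ⟨h.left_mem, h.left_partner_ne_zero⟩,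
    ⟨h.right_mem, h.symm.left_partner_ne_zero⟩]

lemma IsHeavyPendant.four_le_card_generatorsAt (h : IsHeavyPendant S A B q p)
    (hS : IsWeightReduced S) : 4 ≤ (generatorsAt S p).card := by
  obtain ⟨C, hC, hCB, hCA, hAC⟩ :=
    h.toIsPendant.symm.exists_third hS h.wt_left h.anticomm_partner
  obtain ⟨D, hD, hDA, hDB, hCD⟩ :=
    h.toIsPendant.exists_third hS h.wt_right (localSympl_comm (A p) (C p) ▸ hAC)
  obtain ⟨hCp, hDp, hne⟩ := (localSympl_ne_zero_iff _ _).1 hCD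
  have hDC : C ≠ D := fun heq => hne (congrFun heq p)
  have hcard : ({C, D, A, B} : Finset (PauliT ι)).card = 4 := by
    simp [hDC, hCA, hCB, hDA, hDB, h.generators_ne]
  rw [← hcard]
  refine Finset.card_le_card fun s hs => mem_generatorsAt.2 ?_
  simp only [Finset.mem_insert, Finset.mem_singleton] at hs
  rcases hs with rfl | rfl | rfl | rfl
  exacts [⟨hC, hCp⟩, ⟨hD, hDp⟩, ⟨h.left_mem, h.left_partner_ne_zero⟩,
    ⟨h.right_mem, h.symm.left_partner_ne_zero⟩]

lemma IsHeavyPendant.five_le_card_generatorsAt {A' B' : PauliT ι} {q' : ι}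
    (h : IsHeavyPendant S A B q p) (h' : IsHeavyPendant S A' B' q' p) (hne : q ≠ q')
    (hS : IsWeightReduced S) : 5 ≤ (generatorsAt S p).card := by
  obtain ⟨C, hC, hCA, hCB, hCA', hCB', hCp⟩ := h.exists_fifth h' hne hS
  have hcard : ({C, A, B, A', B'} : Finset (PauliT ι)).card = 5 := by
    simp [hCA, hCB, hCA', hCB', h.generators_ne, h'.generators_ne, h.left_ne_left h' hne hS,
      h.left_ne_left h'.symm hne hS, h.symm.left_ne_left h' hne hS,
      h.symm.left_ne_left h'.symm hne hS]
  rw [← hcard]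
  refine Finset.card_le_card fun s hs => mem_generatorsAt.2 ?_
  simp only [Finset.mem_insert, Finset.mem_singleton] at hs
  rcases hs with rfl | rfl | rfl | rfl | rfl
  exacts [⟨hC, hCp⟩, ⟨h.left_mem, h.left_partner_ne_zero⟩,
    ⟨h.right_mem, h.symm.left_partner_ne_zero⟩, ⟨h'.left_mem, h'.left_partner_ne_zero⟩,
    ⟨h'.right_mem, h'.symm.left_partner_ne_zero⟩]

namespace IsWeightReduced

lemma three_add_card_heavyAt_le (hS : IsWeightReduced S)
    (hp : (heavyAt S p ∪ lightAt S p).Nonempty) :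
    3 + (heavyAt S p).card ≤ (generatorsAt S p).card := by
  have htwo := hS.two_mul_card_heavyAt_le p
  obtain h0 | h1 | h2 | h3 : (heavyAt S p).card = 0 ∨ (heavyAt S p).card = 1 ∨
      (heavyAt S p).card = 2 ∨ 3 ≤ (heavyAt S p).card := by omega
  · rw [Finset.card_eq_zero.1 h0, Finset.empty_union] at hp
    obtain ⟨A, B, h⟩ := mem_lightAt.1 hp.choose_spec
    have := h.three_le_card_generatorsAt hS h.wt_left
    omega
  · obtain ⟨q, hq⟩ := Finset.card_pos.1 (h1.symm ▸ one_pos)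
    obtain ⟨A, B, h⟩ := mem_heavyAt.1 hq
    have := h.four_le_card_generatorsAt hS
    omega
  · obtain ⟨q, hq, q', hq', hne⟩ := Finset.one_lt_card.1 (h2.symm ▸ one_lt_two)
    obtain ⟨A, B, h⟩ := mem_heavyAt.1 hq
    obtain ⟨A', B', h'⟩ := mem_heavyAt.1 hq'
    have := h.five_le_card_generatorsAt h' hne hS
    omega
  · omega

/-- The surplus of a partner qubit covers the deficits of all pendant qubits it serves. -/
lemma six_add_le_load (hS : IsWeightReduced S) (p : ι) :
    6 + (2 * (heavyAt S p).card + (lightAt S p).card) ≤ load S p + (6 - load S p) := by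
  rcases (heavyAt S p ∪ lightAt S p).eq_empty_or_nonempty with hempty | hp
  · obtain ⟨hH, hL⟩ := Finset.union_eq_empty.1 hempty
    rw [hH, hL, Finset.card_empty]
    omega
  · have := hS.le_load p
    have := hS.card_lightAt_le p
    have := hS.three_add_card_heavyAt_le hp
    omega

lemma exists_partner (hS : IsWeightReduced S) (q : ι) :
    ∃ p, 6 - load S q ≤
      2 * (if q ∈ heavyAt S p then 1 else 0) + (if q ∈ lightAt S p then 1 else 0) := by
  by_cases hq : load S q < 6
  · obtain ⟨p, ⟨hload, h⟩ | ⟨hload, h⟩⟩ := hS.exists_heavy_or_light hq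
    · exact ⟨p, by rw [hload, if_pos (mem_heavyAt.2 h)]; omega⟩
    · exact ⟨p, by rw [hload, if_pos (mem_lightAt.2 h)]; omega⟩
  · exact ⟨q, by omega⟩

theorem card_le (hS : IsWeightReduced S) : Fintype.card ι ≤ S.card := by
  choose partner hpartner using hS.exists_partner
  have hcharge : ∀ p, ∑ q with partner q = p, (6 - load S q) ≤
      2 * (heavyAt S p).card + (lightAt S p).card := fun p => calc
    _ ≤ ∑ q with partner q = p,
        (2 * (if q ∈ heavyAt S p then 1 else 0) + (if q ∈ lightAt S p then 1 else 0)) :=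
      Finset.sum_le_sum fun q hq => (Finset.mem_filter.1 hq).2 ▸ hpartner q
    _ ≤ ∑ q, (2 * (if q ∈ heavyAt S p then 1 else 0) + (if q ∈ lightAt S p then 1 else 0)) :=
      Finset.sum_le_sum_of_subset (Finset.filter_subset _ _)
    _ = _ := by
      simp only [Finset.sum_add_distrib, ← Finset.mul_sum, Finset.sum_ite_mem,
        Finset.univ_inter, Finset.sum_const, smul_eq_mul, mul_one]
  have htotal : ∑ p, (6 + ∑ q with partner q = p, (6 - load S q)) ≤
      ∑ p, (load S p + (6 - load S p)) :=
    Finset.sum_le_sum fun p _ => (Nat.add_le_add_left (hcharge p) 6).trans (hS.six_add_le_load p)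
  rw [Finset.sum_add_distrib, Finset.sum_add_distrib,
    Finset.sum_fiberwise Finset.univ partner fun q => 6 - load S q, Finset.sum_const,
    Finset.card_univ, smul_eq_mul] at htotal
  have := sum_load_le S
  omega

end IsWeightReduced

end PendantsOfAPartner

/-! ### The lower bound -/

lemma le_distG_iff {G : Submodule (ZMod 2) (PauliT ι)} {d : ℕ∞} :
    d ≤ distG G ↔ ∀ v, inDual G v → v ∉ G → d ≤ wt v := by
  simp only [distG, le_sInf_iff, Set.forall_mem_image, Set.mem_ofPred_eq, and_imp]

theorem four_le_Wgt {G : Submodule (ZMod 2) (PauliT ι)} (hG : IsStabilizer G)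
    (hd : 3 ≤ distG G) (hd' : distG G ≠ ⊤) : 4 ≤ Wgt G := by
  simp only [Wgt, le_iInf_iff]
  intro r g hg
  by_contra! hlt
  have hwt (i : Fin r) : wt (g i) ≤ 3 := by
    have := (Finset.le_sup (f := fun i => (wt (g i) : ℕ∞)) (Finset.mem_univ i)).trans_lt hlt
    exact Nat.lt_succ_iff.1 (by exact_mod_cast this)
  have hmem (i : Fin r) : g i ∈ G := hg.2 ▸ Submodule.subset_span (Set.mem_range_self i)
  let S₀ : Finset (PauliT ι) := Finset.univ.image g
  have hspan : Submodule.span (ZMod 2) (S₀ : Set (PauliT ι)) = G := by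
    rw [Finset.coe_image, Finset.coe_univ, Set.image_univ, hg.2]
  obtain ⟨S, hS, hcard⟩ := exists_isWeightReduced (S₀ := S₀)
    (by simpa [S₀] using fun i j => hG _ (hmem i) _ (hmem j)) (by simpa [S₀] using hwt)
    (fun v hv hcomm => by
      rw [hspan]
      by_contra hvG
      have := le_distG_iff.1 hd v (hspan ▸ inDual_span_iff.2 hcomm) hvG
      exact absurd (by exact_mod_cast this : 3 ≤ wt v) (by omega))
  have hrank : Module.finrank (ZMod 2) G = r := by
    rw [← hg.2, finrank_span_eq_card hg.1, Fintype.card_fin]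
  have hr : S₀.card ≤ r := Finset.card_image_le.trans_eq (Finset.card_fin r)
  have := hG.finrank_lt_card hd'
  have := hS.card_le
  omega

theorem four_le_Wopt (n k : ℕ) {d : ℕ∞} (hd : 3 ≤ d) (hd' : d ≠ ⊤) : 4 ≤ Wopt n k d := by
  simp only [Wopt, le_iInf_iff]
  rintro G ⟨hG, -, rfl⟩
  exact four_le_Wgt hG hd hd'

/-! ### Copies of a code -/

lemma distG_le {G : Submodule (ZMod 2) (PauliT ι)} {v : PauliT ι} (hv : inDual G v)
    (hvG : v ∉ G) : distG G ≤ wt v :=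
  le_distG_iff.1 le_rfl v hv hvG

lemma Wgt_span_le {S : Set (PauliT ι)} {w : ℕ} (hwt : ∀ s ∈ S, wt s ≤ w) :
    Wgt (Submodule.span (ZMod 2) S) ≤ w := by
  obtain ⟨b, hbS, hspan, hli⟩ := exists_linearIndependent (ZMod 2) S
  let e := (Fintype.equivFin b).symm
  have hbasis : IsBasisFam (Submodule.span (ZMod 2) S) fun i => (e i : PauliT ι) := by
    refine ⟨hli.comp e e.injective, ?_⟩
    rw [← hspan]
    congr
    exact (e.surjective.range_comp _).trans Subtype.range_coe
  refine iInf_le_of_le _ (iInf₂_le_of_le _ hbasis (Finset.sup_le fun i _ => ?_))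
  exact Nat.cast_le.2 (hwt _ (hbS (e i).2))

section Copies

variable {α κ : Type} [Fintype κ] (e : α × κ ≃ ι)

/-- Cutting a Pauli string into blocks along an identification of the qubits with `α × κ`. -/
def blocks : PauliT ι ≃ₗ[ZMod 2] α → PauliT κ :=
  (LinearEquiv.funCongrLeft (ZMod 2) (ZMod 2 × ZMod 2) e).trans
    (LinearEquiv.curry (ZMod 2) (ZMod 2 × ZMod 2) α κ)

/-- The tensor product of copies of the code `G`, one for each block. -/
def copies (G : Submodule (ZMod 2) (PauliT κ)) : Submodule (ZMod 2) (PauliT ι) :=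
  (Submodule.pi Set.univ fun _ => G).comap (blocks e).toLinearMap

variable {e} {G : Submodule (ZMod 2) (PauliT κ)}

omit [Fintype ι] [Fintype κ] in
lemma mem_copies {v : PauliT ι} : v ∈ copies e G ↔ ∀ a, blocks e v a ∈ G := by
  simp [copies]

omit [Fintype ι] [Fintype κ] in
lemma blocks_symm_single_mem_copies {g : PauliT κ} (hg : g ∈ G) (a : α) :
    (blocks e).symm (Pi.single a g) ∈ copies e G := by
  refine mem_copies.2 fun b => ?_
  rw [LinearEquiv.apply_symm_apply]
  rcases eq_or_ne b a with rfl | hb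
  · rwa [Pi.single_eq_same]
  · rw [Pi.single_eq_of_ne hb]
    exact G.zero_mem

lemma sympl_eq_sum_blocks [Fintype α] (u v : PauliT ι) :
    sympl u v = ∑ a, sympl (blocks e u a) (blocks e v a) := by
  rw [sympl, ← e.sum_comp, Fintype.sum_prod_type]
  rfl

lemma sympl_blocks_symm_single [Finite α] (v : PauliT ι) (a : α) (g : PauliT κ) :
    sympl v ((blocks e).symm (Pi.single a g)) = sympl (blocks e v a) g := by
  cases nonempty_fintype α
  rw [sympl_eq_sum_blocks (e := e), Finset.sum_eq_single a _ (by simp)]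
  · rw [LinearEquiv.apply_symm_apply, Pi.single_eq_same]
  · intro b _ hb
    rw [LinearEquiv.apply_symm_apply, Pi.single_eq_of_ne hb]
    exact map_zero (symplForm κ _)

lemma wt_eq_sum_blocks [Fintype α] (v : PauliT ι) : wt v = ∑ a, wt (blocks e v a) := by
  simp only [wt, Finset.card_filter]
  rw [← e.sum_comp, Fintype.sum_prod_type]
  rfl

lemma wt_blocks_symm_single [Finite α] (a : α) (g : PauliT κ) :
    wt ((blocks e).symm (Pi.single a g)) = wt g := by
  cases nonempty_fintype α
  rw [wt_eq_sum_blocks (e := e), LinearEquiv.apply_symm_apply, Finset.sum_eq_single a _ (by simp)]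
  · rw [Pi.single_eq_same]
  · intro b _ hb
    rw [Pi.single_eq_of_ne hb]
    simp [wt]

lemma inDual_copies_iff [Finite α] {v : PauliT ι} :
    inDual (copies e G) v ↔ ∀ a, inDual G (blocks e v a) := by
  refine ⟨fun h a g hg => ?_, fun h g hg => ?_⟩
  · rw [← sympl_blocks_symm_single]
    exact h _ (blocks_symm_single_mem_copies hg a)
  · cases nonempty_fintype α
    rw [sympl_eq_sum_blocks (e := e)]
    exact Finset.sum_eq_zero fun a _ => h a _ (mem_copies.1 hg a)

lemma IsStabilizer.copies [Finite α] (hG : IsStabilizer G) : IsStabilizer (copies e G) :=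
  fun _ hu => inDual_copies_iff.2 fun a => hG _ (mem_copies.1 hu a)

lemma distG_copies [Finite α] [Nonempty α] : distG (copies e G) = distG G := by
  refine le_antisymm (le_distG_iff.2 fun v hv hvG => ?_) (le_distG_iff.2 fun v hv hvG => ?_)
  · obtain ⟨a⟩ := ‹Nonempty α›
    have hblock : blocks e ((blocks e).symm (Pi.single a v)) a = v := by
      rw [LinearEquiv.apply_symm_apply, Pi.single_eq_same]
    rw [← wt_blocks_symm_single (e := e) a v]
    refine distG_le (fun g hg => ?_) fun hmem => hvG (hblock ▸ mem_copies.1 hmem a)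
    rw [sympl_comm, sympl_blocks_symm_single, sympl_comm]
    exact hv _ (mem_copies.1 hg a)
  · obtain ⟨a, ha⟩ := not_forall.1 (mt mem_copies.2 hvG)
    refine (distG_le (inDual_copies_iff.1 hv a) ha).trans (Nat.cast_le.2 ?_)
    cases nonempty_fintype α
    rw [wt_eq_sum_blocks (e := e)]
    exact Finset.single_le_sum (f := fun a => wt (blocks e v a)) (fun _ _ => Nat.zero_le _)
      (Finset.mem_univ a)

omit [Fintype ι] [Fintype κ] in
lemma finrank_copies [Fintype α] [Finite κ] :
    Module.finrank (ZMod 2) (copies e G) = Fintype.card α * Module.finrank (ZMod 2) G := by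
  have hpi : (Submodule.pi Set.univ fun _ : α => G) =
      LinearMap.range (G.subtype.compLeft α) := by
    rw [LinearMap.range_compLeft, Submodule.range_subtype]
  have hcopies : copies e G =
      (Submodule.pi Set.univ fun _ : α => G).map (blocks e).symm.toLinearMap :=
    Submodule.comap_equiv_eq_map_symm _ _
  rw [hcopies, LinearEquiv.finrank_map_eq, hpi,
    LinearMap.finrank_range_of_inj (G.injective_subtype.comp_left), Module.finrank_pi_fintype,
    Finset.sum_const, Finset.card_univ, smul_eq_mul]

omit [Fintype ι] [Fintype κ] in
lemma copies_span [Finite α] (S : Set (PauliT κ)) :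
    copies e (Submodule.span (ZMod 2) S) =
      Submodule.span (ZMod 2) (⋃ a, (fun s => (blocks e).symm (Pi.single a s)) '' S) := by
  refine le_antisymm (fun v hv => ?_) (Submodule.span_le.2 ?_)
  · cases nonempty_fintype α
    rw [mem_copies] at hv
    rw [← (blocks e).symm_apply_apply v, ← Finset.univ_sum_single (blocks e v), map_sum]
    refine sum_mem fun a _ => ?_
    have hle : Submodule.span (ZMod 2) S ≤ (Submodule.span (ZMod 2)
        (⋃ a, (fun s => (blocks e).symm (Pi.single a s)) '' S)).comap
          ((blocks e).symm.toLinearMap ∘ₗ LinearMap.single (ZMod 2) (fun _ => PauliT κ) a) :=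
      Submodule.span_le.2 fun s hs =>
        Submodule.subset_span (Set.mem_iUnion.2 ⟨a, Set.mem_image_of_mem _ hs⟩)
    exact hle (hv a)
  · refine Set.iUnion_subset fun a => ?_
    rintro _ ⟨s, hs, rfl⟩
    exact blocks_symm_single_mem_copies (Submodule.subset_span hs) a

lemma Wgt_copies_span_le [Finite α] {S : Set (PauliT κ)} {w : ℕ} (hwt : ∀ s ∈ S, wt s ≤ w) :
    Wgt (copies e (Submodule.span (ZMod 2) S)) ≤ w := by
  rw [copies_span]
  refine Wgt_span_le fun t ht => ?_
  obtain ⟨a, s, hs, rfl⟩ := Set.mem_iUnion.1 ht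
  exact (wt_blocks_symm_single a s).trans_le (hwt s hs)

end Copies

/-! ### CSS codes -/

section CSS

variable {κ : Type}

variable (κ) in
/-- The `X`-type Pauli strings. -/
def xString : (κ → ZMod 2) →ₗ[ZMod 2] PauliT κ := (LinearMap.inl _ _ _).compLeft κ

variable (κ) in
/-- The `Z`-type Pauli strings. -/
def zString : (κ → ZMod 2) →ₗ[ZMod 2] PauliT κ := (LinearMap.inr _ _ _).compLeft κ

variable (κ) in
/-- The `X`-part of a Pauli string. -/
def xPart : PauliT κ →ₗ[ZMod 2] κ → ZMod 2 := (LinearMap.fst _ _ _).compLeft κ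

variable (κ) in
/-- The `Z`-part of a Pauli string. -/
def zPart : PauliT κ →ₗ[ZMod 2] κ → ZMod 2 := (LinearMap.snd _ _ _).compLeft κ

/-- The generators of the CSS code with `X`-checks `A` and `Z`-checks `B`. -/
def cssGenerators (A B : Set (κ → ZMod 2)) : Set (PauliT κ) := xString κ '' A ∪ zString κ '' B

lemma xPart_xString (f : κ → ZMod 2) : xPart κ (xString κ f) = f := rfl

lemma xPart_zString (g : κ → ZMod 2) : xPart κ (zString κ g) = 0 := rfl

lemma zPart_xString (f : κ → ZMod 2) : zPart κ (xString κ f) = 0 := rfl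

lemma zPart_zString (g : κ → ZMod 2) : zPart κ (zString κ g) = g := rfl

lemma xString_xPart_add_zString_zPart (v : PauliT κ) :
    xString κ (xPart κ v) + zString κ (zPart κ v) = v := by
  ext m
  exacts [add_zero (v m).1, zero_add (v m).2]

lemma mem_span_cssGenerators_iff {A B : Set (κ → ZMod 2)} {v : PauliT κ} :
    v ∈ Submodule.span (ZMod 2) (cssGenerators A B) ↔
      xPart κ v ∈ Submodule.span (ZMod 2) A ∧ zPart κ v ∈ Submodule.span (ZMod 2) B := by
  rw [cssGenerators, Submodule.span_union, ← Submodule.map_span, ← Submodule.map_span,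
    Submodule.mem_sup]
  constructor
  · rintro ⟨_, ⟨f, hf, rfl⟩, _, ⟨g, hg, rfl⟩, rfl⟩
    rw [map_add, map_add, xPart_xString, xPart_zString, zPart_xString, zPart_zString, add_zero,
      zero_add]
    exact ⟨hf, hg⟩
  · exact fun h => ⟨_, Submodule.mem_map_of_mem h.1, _, Submodule.mem_map_of_mem h.2,
      xString_xPart_add_zString_zPart v⟩

variable [Fintype κ]

lemma sympl_eq_dotProduct (u v : PauliT κ) :
    sympl u v = xPart κ u ⬝ᵥ zPart κ v + zPart κ u ⬝ᵥ xPart κ v :=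
  Finset.sum_add_distrib

lemma sympl_xString (v : PauliT κ) (f : κ → ZMod 2) :
    sympl v (xString κ f) = zPart κ v ⬝ᵥ f := by
  rw [sympl_eq_dotProduct, zPart_xString, xPart_xString, dotProduct_zero, zero_add]

lemma sympl_zString (v : PauliT κ) (g : κ → ZMod 2) :
    sympl v (zString κ g) = xPart κ v ⬝ᵥ g := by
  rw [sympl_eq_dotProduct, zPart_zString, xPart_zString, dotProduct_zero, add_zero]

lemma inDual_span_cssGenerators_iff {A B : Set (κ → ZMod 2)} {v : PauliT κ} :
    inDual (Submodule.span (ZMod 2) (cssGenerators A B)) v ↔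
      (∀ f ∈ A, zPart κ v ⬝ᵥ f = 0) ∧ ∀ g ∈ B, xPart κ v ⬝ᵥ g = 0 := by
  rw [inDual_span_iff, cssGenerators, Set.union_def]
  simp only [Set.mem_ofPred_eq, or_imp, forall_and, Set.forall_mem_image, sympl_xString,
    sympl_zString]

lemma isStabilizer_span_cssGenerators {A B : Set (κ → ZMod 2)}
    (h : ∀ f ∈ A, ∀ g ∈ B, f ⬝ᵥ g = 0) :
    IsStabilizer (Submodule.span (ZMod 2) (cssGenerators A B)) := by
  refine isStabilizer_span ?_
  rintro _ (⟨f, hf, rfl⟩ | ⟨g, hg, rfl⟩) _ (⟨f', hf', rfl⟩ | ⟨g', hg', rfl⟩)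
  · rw [sympl_xString, zPart_xString, zero_dotProduct]
  · rw [sympl_zString, xPart_xString, h f hf g' hg']
  · rw [sympl_xString, zPart_zString, dotProduct_comm, h f' hf' g hg]
  · rw [sympl_zString, xPart_zString, zero_dotProduct]

lemma wt_xString (f : κ → ZMod 2) : wt (xString κ f) = Finset.card {m | f m ≠ 0} := by
  refine congrArg Finset.card (Finset.filter_congr fun m _ => not_congr ?_)
  exact ⟨congrArg Prod.fst, fun h => Prod.ext h rfl⟩

lemma wt_zString (g : κ → ZMod 2) : wt (zString κ g) = Finset.card {m | g m ≠ 0} := by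
  refine congrArg Finset.card (Finset.filter_congr fun m _ => not_congr ?_)
  exact ⟨congrArg Prod.snd, fun h => Prod.ext rfl h⟩

lemma card_support_xPart_le_wt (v : PauliT κ) : Finset.card {m | xPart κ v m ≠ 0} ≤ wt v :=
  Finset.card_le_card (Finset.monotone_filter_right _ fun _ _ hm h => hm (congrArg Prod.fst h))

lemma card_support_zPart_le_wt (v : PauliT κ) : Finset.card {m | zPart κ v m ≠ 0} ≤ wt v :=
  Finset.card_le_card (Finset.monotone_filter_right _ fun _ _ hm h => hm (congrArg Prod.snd h))

end CSS

/-! ### The rotated surface code -/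

section SurfaceCode

variable {d : ℕ}

/-- The indicator of the coordinates `j - 1` and `j`, cut off to a single coordinate when `j = 0`
or `j = d`. -/
def domino (d j : ℕ) (c : Fin d) : ZMod 2 := if c.1 = j ∨ c.1 + 1 = j then 1 else 0

/-- The product function on the `d × d` grid. -/
def outer (u v : Fin d → ZMod 2) (m : Fin d × Fin d) : ZMod 2 := u m.1 * v m.2

/-- The face of the grid whose lower right corner is the qubit `(i, j)`. -/
def face (d i j : ℕ) : Fin d × Fin d → ZMod 2 := outer (domino d i) (domino d j)

/-- The faces of one colour of the checkerboard; those on the boundary lie on the first or the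
last row. The parity `e` selects the colour. -/
def rowFaces (d e : ℕ) : Set (Fin d × Fin d → ZMod 2) :=
  {f | ∃ i j, i ≤ d ∧ 0 < j ∧ j < d ∧ (i + j + e) % 2 = 0 ∧ face d i j = f}

/-- The faces of the colour opposite to `rowFaces d e`; those on the boundary lie on the first or
the last column. -/
def colFaces (d e : ℕ) : Set (Fin d × Fin d → ZMod 2) :=
  {f | ∃ i j, 0 < i ∧ i < d ∧ j ≤ d ∧ (i + j + e) % 2 = 1 ∧ face d i j = f}

/-- The sum of the first `j` entries of row `r`. -/
def prefixSum (r : Fin d) (j : ℕ) : (Fin d × Fin d → ZMod 2) →ₗ[ZMod 2] ZMod 2 :=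
  ∑ c : Fin d with c.1 < j, LinearMap.proj (r, c)

lemma prefixSum_apply (r : Fin d) (j : ℕ) (F : Fin d × Fin d → ZMod 2) :
    prefixSum r j F = ∑ c : Fin d with c.1 < j, F (r, c) := by
  simp only [prefixSum, LinearMap.sum_apply, LinearMap.proj_apply]

lemma prefixSum_zero (r : Fin d) (F : Fin d × Fin d → ZMod 2) : prefixSum r 0 F = 0 := by
  simp [prefixSum_apply]

/-- The sum of the entries of row `r`. -/
def rowSum (r : Fin d) : (Fin d × Fin d → ZMod 2) →ₗ[ZMod 2] ZMod 2 :=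
  ∑ c, LinearMap.proj (r, c)

lemma prefixSum_of_le {j : ℕ} (hj : d ≤ j) (r : Fin d) :
    prefixSum r j = rowSum r := by
  rw [prefixSum, rowSum, Finset.filter_true_of_mem fun c _ => c.2.trans_le hj]

lemma prefixSum_add_prefixSum_succ (r c : Fin d) (F : Fin d × Fin d → ZMod 2) :
    prefixSum r c F + prefixSum r (c + 1) F = F (r, c) := by
  simp only [prefixSum_apply, Finset.sum_filter, ← Finset.sum_add_distrib]
  rw [Finset.sum_eq_single c]
  · simp
  · intro b _ hb
    have hb' : b.1 ≠ c.1 := Fin.val_ne_of_ne hb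
    rcases lt_or_gt_of_ne hb' with h | h
    · rw [if_pos h, if_pos (by omega), CharTwo.add_self_eq_zero]
    · rw [if_neg (by omega), if_neg (by omega), add_zero]
  · simp

lemma sum_mul_domino (r : Fin d) (j : ℕ) (F : Fin d × Fin d → ZMod 2) :
    ∑ c, F (r, c) * domino d j c = prefixSum r (j + 1) F + prefixSum r (j - 1) F := by
  simp only [prefixSum_apply, Finset.sum_filter, ← Finset.sum_add_distrib, domino]
  refine Finset.sum_congr rfl fun c _ => ?_
  by_cases h : c.1 < j - 1
  · rw [if_neg (by omega), if_pos (by omega), if_pos h, mul_zero, CharTwo.add_self_eq_zero]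
  · rw [if_neg h, add_zero, mul_ite, mul_one, mul_zero]
    exact if_congr (by omega) rfl rfl

lemma dotProduct_domino {r r' : Fin d} (hr : r.1 + 1 = r'.1) (u : Fin d → ZMod 2) :
    u ⬝ᵥ domino d r' = u r + u r' := by
  have hne : r ≠ r' := fun h => by simp [h] at hr
  rw [dotProduct, Fintype.sum_eq_add r r' hne]
  · simp [domino, hr]
  · rintro c ⟨hc, hc'⟩
    rw [domino, if_neg, mul_zero]
    have := Fin.val_ne_of_ne hc
    have := Fin.val_ne_of_ne hc'
    omega

lemma sum_range_mul_domino (w : ℕ → ZMod 2) (c : Fin d) :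
    ∑ j ∈ Finset.range (d + 1), w j * domino d j c = w c + w (c + 1) := by
  rw [Finset.sum_eq_add_of_mem c.1 (c.1 + 1) (Finset.mem_range.2 (by omega))
    (Finset.mem_range.2 (by omega)) (Nat.succ_ne_self _).symm]
  · simp [domino]
  · rintro j _ ⟨hj, hj'⟩
    rw [domino, if_neg (by omega), mul_zero]

lemma dotProduct_outer (F : Fin d × Fin d → ZMod 2) (u v : Fin d → ZMod 2) :
    F ⬝ᵥ outer u v = (fun r => ∑ c, F (r, c) * v c) ⬝ᵥ u := by
  simp only [dotProduct, outer, Fintype.sum_prod_type, Finset.sum_mul]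
  exact Finset.sum_congr rfl fun r _ => Finset.sum_congr rfl fun c _ => by ring

lemma outer_dotProduct_outer (u v u' v' : Fin d → ZMod 2) :
    outer u v ⬝ᵥ outer u' v' = (u ⬝ᵥ u') * (v ⬝ᵥ v') := by
  simp only [dotProduct, outer, Fintype.sum_prod_type, Finset.sum_mul_sum, mul_mul_mul_comm]

lemma one_dotProduct_domino {j : ℕ} (hj : 0 < j) (hjd : j < d) :
    (1 : Fin d → ZMod 2) ⬝ᵥ domino d j = 0 := by
  rw [dotProduct_domino (r := ⟨j - 1, by omega⟩) (r' := ⟨j, hjd⟩) (Nat.sub_add_cancel hj)]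
  exact CharTwo.add_self_eq_zero _

lemma domino_dotProduct_domino {i j : ℕ} (hj : 0 < j) (hjd : j < d) (hij : i % 2 = j % 2) :
    domino d i ⬝ᵥ domino d j = 0 := by
  rw [dotProduct_domino (r := ⟨j - 1, by omega⟩) (r' := ⟨j, hjd⟩) (Nat.sub_add_cancel hj)]
  rcases eq_or_ne i j with rfl | hne
  · simp [domino, Nat.sub_add_cancel hj, CharTwo.add_self_eq_zero]
  · rw [domino, domino, if_neg (by simp only; omega), if_neg (by simp only; omega), add_zero]

lemma rowFaces_dotProduct_colFaces {e : ℕ} {f g : Fin d × Fin d → ZMod 2} (hf : f ∈ rowFaces d e)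
    (hg : g ∈ colFaces d e) : f ⬝ᵥ g = 0 := by
  obtain ⟨i, j, -, hj, hjd, hij, rfl⟩ := hf
  obtain ⟨i', j', hi', hid', -, hij', rfl⟩ := hg
  rw [face, face, outer_dotProduct_outer]
  by_cases h : i % 2 = i' % 2
  · rw [domino_dotProduct_domino hi' hid' h, zero_mul]
  · rw [dotProduct_comm (domino d j), domino_dotProduct_domino hj hjd (by omega), mul_zero]

lemma rowSum_outer (r : Fin d) (u v : Fin d → ZMod 2) :
    rowSum r (outer u v) = u r * (1 ⬝ᵥ v) := by
  simp [rowSum, outer, dotProduct, Finset.mul_sum]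

lemma prefixSum_eq_prefixSum {e : ℕ} {F : Fin d × Fin d → ZMod 2}
    (hF : ∀ g ∈ colFaces d e, F ⬝ᵥ g = 0) {r r' : Fin d} (hr : r.1 + 1 = r'.1) :
    ∀ {j : ℕ}, j ≤ d + 1 → (r' + j + e) % 2 = 0 → prefixSum r j F = prefixSum r' j F := by
  have hface (j : ℕ) (hj : j ≤ d) (hpar : (r' + j + e) % 2 = 1) :
      prefixSum r (j + 1) F + prefixSum r (j - 1) F +
        (prefixSum r' (j + 1) F + prefixSum r' (j - 1) F) = 0 := by
    have h : F ⬝ᵥ face d r' j = 0 := hF _ ⟨r', j, by omega, r'.2, hj, hpar, rfl⟩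
    rwa [face, dotProduct_outer, dotProduct_domino hr, sum_mul_domino, sum_mul_domino] at h
  intro j
  induction j using Nat.twoStepInduction with
  | zero => exact fun _ _ => by rw [prefixSum_zero, prefixSum_zero]
  | one =>
    intro _ hpar
    have h := hface 0 (Nat.zero_le d) (by omega)
    rw [Nat.zero_sub, prefixSum_zero, prefixSum_zero, add_zero, add_zero] at h
    exact CharTwo.add_eq_zero.1 h
  | more j ih _ =>
    intro hj hpar
    have h := hface (j + 1) (by omega) (by omega)
    rw [Nat.add_sub_cancel, ih (by omega) (by omega), add_add_add_comm,
      CharTwo.add_self_eq_zero, add_zero] at h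
    exact CharTwo.add_eq_zero.1 h

lemma rowSum_eq_rowSum {e : ℕ} {F : Fin d × Fin d → ZMod 2}
    (hF : ∀ g ∈ colFaces d e, F ⬝ᵥ g = 0) (r r' : Fin d) : rowSum r F = rowSum r' F := by
  have hsucc (n : ℕ) (hn : n + 1 < d) : rowSum ⟨n, by omega⟩ F = rowSum ⟨n + 1, hn⟩ F := by
    obtain ⟨j, hj, hjd, hpar⟩ : ∃ j, d ≤ j ∧ j ≤ d + 1 ∧ (n + 1 + j + e) % 2 = 0 := by
      by_cases h : (n + 1 + d + e) % 2 = 0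
      exacts [⟨d, by omega, by omega, h⟩, ⟨d + 1, by omega, by omega, by omega⟩]
    rw [← prefixSum_of_le hj, ← prefixSum_of_le hj]
    exact prefixSum_eq_prefixSum hF rfl hjd hpar
  have hconst (n : ℕ) (hn : n < d) : rowSum ⟨n, hn⟩ F = rowSum ⟨0, by omega⟩ F := by
    induction n with
    | zero => rfl
    | succ n ih => exact (hsucc n hn).symm.trans (ih (by omega))
  exact (hconst r r.2).trans (hconst r' r'.2).symm

/-- The coefficient of the face `(i, j)` is the sum of the first `j` entries of a row meeting it;
by `prefixSum_eq_prefixSum` the choice of the row does not matter. -/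
lemma exists_faceCoeff {e : ℕ} {F : Fin d × Fin d → ZMod 2}
    (hF : ∀ g ∈ colFaces d e, F ⬝ᵥ g = 0) :
    ∃ coeff : ℕ → ℕ → ZMod 2,
      (∀ (r : Fin d) (j : ℕ), j ≤ d → coeff r j + coeff (r + 1) j = prefixSum r j F) ∧
        ∀ i j, coeff i j ≠ 0 → (i + j + e) % 2 = 0 ∧ ∃ r, prefixSum r j F ≠ 0 := by
  rcases d.eq_zero_or_pos with rfl | hd
  · exact ⟨0, fun r => r.elim0, fun _ _ h => absurd rfl h⟩
  let row (i : ℕ) : Fin d := ⟨min i (d - 1), by omega⟩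
  refine ⟨fun i j => if (i + j + e) % 2 = 0 then prefixSum (row i) j F else 0, fun r j hj => ?_,
    fun i j hij => ?_⟩
  · dsimp only
    by_cases hpar : (r + j + e) % 2 = 0
    · have hrow : row r = r := Fin.ext (min_eq_left (by omega))
      rw [if_pos hpar, if_neg (by omega), hrow, add_zero]
    · rw [if_neg hpar, if_pos (by omega), zero_add]
      rcases lt_or_ge (r.1 + 1) d with hr | hr
      · have hrow : (row (r + 1)).1 = r + 1 := min_eq_left (by omega)
        exact (prefixSum_eq_prefixSum hF hrow.symm (by omega) (by omega)).symm
      · have hrow : row (r + 1) = r := Fin.ext (by simp only [row]; omega)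
        rw [hrow]
  · obtain ⟨hpar, hne⟩ : (i + j + e) % 2 = 0 ∧ prefixSum (row i) j F ≠ 0 := by simpa using hij
    exact ⟨hpar, _, hne⟩

lemma mem_span_rowFaces {e : ℕ} {F : Fin d × Fin d → ZMod 2}
    (hF : ∀ g ∈ colFaces d e, F ⬝ᵥ g = 0) (hsum : ∀ r, rowSum r F = 0) :
    F ∈ Submodule.span (ZMod 2) (rowFaces d e) := by
  obtain ⟨coeff, hcoeff, hcoeff_ne⟩ := exists_faceCoeff hF
  have hexpand : F =
      ∑ j ∈ Finset.range (d + 1), ∑ i ∈ Finset.range (d + 1), coeff i j • face d i j := by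
    ext ⟨r, c⟩
    simp only [Finset.sum_apply, Pi.smul_apply, face, outer, smul_eq_mul, ← mul_assoc,
      ← Finset.sum_mul, sum_range_mul_domino]
    rw [hcoeff r c c.2.le, hcoeff r (c + 1) c.2, prefixSum_add_prefixSum_succ]
  rw [hexpand]
  refine sum_mem fun j hj => sum_mem fun i hi => ?_
  rw [Finset.mem_range] at hi hj
  by_cases hij : coeff i j = 0
  · rw [hij, zero_smul]
    exact Submodule.zero_mem _
  obtain ⟨hpar, r, hr⟩ := hcoeff_ne i j hij
  have hj0 : j ≠ 0 := fun h => hr (h ▸ prefixSum_zero r F)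
  have hjd : j ≠ d := fun h => hr (by rw [prefixSum_of_le h.ge, hsum])
  exact Submodule.smul_mem _ _
    (Submodule.subset_span ⟨i, j, by omega, by omega, by omega, hpar, rfl⟩)

lemma mem_span_rowFaces_iff {e : ℕ} {F : Fin d × Fin d → ZMod 2}
    (hF : ∀ g ∈ colFaces d e, F ⬝ᵥ g = 0) (r : Fin d) :
    F ∈ Submodule.span (ZMod 2) (rowFaces d e) ↔ rowSum r F = 0 := by
  refine ⟨fun h => ?_, fun h => mem_span_rowFaces hF fun r' => (rowSum_eq_rowSum hF r' r).trans h⟩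
  refine (Submodule.span_le (p := LinearMap.ker (rowSum r))).2 ?_ h
  rintro _ ⟨i, j, -, hj, hjd, -, rfl⟩
  rw [SetLike.mem_coe, LinearMap.mem_ker, face, rowSum_outer, one_dotProduct_domino hj hjd,
    mul_zero]

lemma le_card_support {e : ℕ} {F : Fin d × Fin d → ZMod 2} (hF : ∀ g ∈ colFaces d e, F ⬝ᵥ g = 0)
    (hspan : F ∉ Submodule.span (ZMod 2) (rowFaces d e)) :
    d ≤ Finset.card {m | F m ≠ 0} := by
  refine (Finset.card_fin d).symm.trans_le
    (Finset.card_le_card_of_surjOn Prod.fst fun r _ => ?_)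
  obtain ⟨c, -, hc⟩ : ∃ c ∈ Finset.univ, F (r, c) ≠ 0 := by
    refine Finset.exists_ne_zero_of_sum_ne_zero fun h => hspan ?_
    rwa [mem_span_rowFaces_iff hF r, rowSum, LinearMap.sum_apply]
  exact ⟨(r, c), Finset.mem_coe.2 (Finset.mem_filter.2 ⟨Finset.mem_univ _, hc⟩), rfl⟩

variable (d) in
/-- Reflection of the grid in its diagonal. -/
def transpose : (Fin d × Fin d → ZMod 2) ≃ₗ[ZMod 2] (Fin d × Fin d → ZMod 2) :=
  LinearEquiv.funCongrLeft (ZMod 2) (ZMod 2) (Equiv.prodComm (Fin d) (Fin d))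

lemma transpose_outer (u v : Fin d → ZMod 2) : transpose d (outer u v) = outer v u :=
  funext fun _ => mul_comm _ _

lemma transpose_dotProduct (F G : Fin d × Fin d → ZMod 2) :
    transpose d F ⬝ᵥ G = F ⬝ᵥ transpose d G :=
  (Equiv.prodComm (Fin d) (Fin d)).sum_comp fun m => F m * G m.swap

lemma transpose_mem_rowFaces_iff {e e' : ℕ} (he : Odd (e + e')) {f : Fin d × Fin d → ZMod 2} :
    transpose d f ∈ rowFaces d e ↔ f ∈ colFaces d e' := by
  rw [Nat.odd_iff] at he
  constructor
  · rintro ⟨i, j, hi, hj, hjd, hpar, hf⟩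
    refine ⟨j, i, hj, hjd, hi, by omega, (transpose d).injective ?_⟩
    rw [← hf, face, transpose_outer, face]
  · rintro ⟨i, j, hi, hid, hj, hpar, rfl⟩
    exact ⟨j, i, hj, hi, hid, by omega, (transpose_outer _ _).symm⟩

lemma transpose_mem_span_rowFaces_iff {e e' : ℕ} (he : Odd (e + e'))
    {F : Fin d × Fin d → ZMod 2} :
    transpose d F ∈ Submodule.span (ZMod 2) (rowFaces d e) ↔
      F ∈ Submodule.span (ZMod 2) (colFaces d e') := by
  have himage : colFaces d e' = (transpose d).symm '' rowFaces d e := by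
    rw [LinearEquiv.image_symm_eq_preimage]
    exact Set.ext fun f => (transpose_mem_rowFaces_iff he).symm
  rw [himage, Submodule.span_image_linearEquiv, Submodule.mem_map_equiv, LinearEquiv.symm_symm]

/-- The rotated surface code on the `d × d` grid. -/
def surfaceCode (d : ℕ) : Submodule (ZMod 2) (PauliT (Fin d × Fin d)) :=
  Submodule.span (ZMod 2) (cssGenerators (rowFaces d 0) (colFaces d 0))

lemma isStabilizer_surfaceCode (d : ℕ) : IsStabilizer (surfaceCode d) :=
  isStabilizer_span_cssGenerators fun _ hf _ hg => rowFaces_dotProduct_colFaces hf hg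

lemma mem_surfaceCode_iff {v : PauliT (Fin d × Fin d)} :
    v ∈ surfaceCode d ↔ xPart _ v ∈ Submodule.span (ZMod 2) (rowFaces d 0) ∧
      transpose d (zPart _ v) ∈ Submodule.span (ZMod 2) (rowFaces d 1) := by
  rw [surfaceCode, mem_span_cssGenerators_iff, transpose_mem_span_rowFaces_iff (e' := 0) odd_one]

lemma inDual_surfaceCode_iff {v : PauliT (Fin d × Fin d)} :
    inDual (surfaceCode d) v ↔ (∀ g ∈ colFaces d 0, xPart _ v ⬝ᵥ g = 0) ∧
      ∀ g ∈ colFaces d 1, transpose d (zPart _ v) ⬝ᵥ g = 0 := by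
  rw [surfaceCode, inDual_span_cssGenerators_iff, and_comm]
  refine and_congr_right fun _ => ⟨fun h g hg => ?_, fun h f hf => ?_⟩
  · rw [transpose_dotProduct]
    exact h _ ((transpose_mem_rowFaces_iff odd_one).2 hg)
  · have := h (transpose d f) ((transpose_mem_rowFaces_iff (e := 0) odd_one).1 hf)
    rwa [transpose_dotProduct] at this

lemma le_wt_of_notMem_surfaceCode {v : PauliT (Fin d × Fin d)} (hv : inDual (surfaceCode d) v)
    (hvG : v ∉ surfaceCode d) : d ≤ wt v := by
  obtain ⟨hx, hz⟩ := inDual_surfaceCode_iff.1 hv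
  rw [mem_surfaceCode_iff, not_and_or] at hvG
  rcases hvG with h | h
  · exact (le_card_support hx h).trans (card_support_xPart_le_wt v)
  · have hcard : Finset.card {m | transpose d (zPart _ v) m ≠ 0} =
        Finset.card {m | zPart _ v m ≠ 0} :=
      Finset.card_equiv (Equiv.prodComm _ _) fun m => by
        simp only [Finset.mem_filter, Finset.mem_univ, true_and]; rfl
    exact (le_card_support hz h).trans (hcard.trans_le (card_support_zPart_le_wt v))

lemma card_support_outer (u v : Fin d → ZMod 2) :
    Finset.card {m | outer u v m ≠ 0} =
      Finset.card {r | u r ≠ 0} * Finset.card {c | v c ≠ 0} := by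
  rw [← Finset.card_product, ← Finset.filter_product]
  simp only [outer, mul_ne_zero_iff, Finset.univ_product_univ]

lemma card_support_domino_le (j : ℕ) : Finset.card {c | domino d j c ≠ 0} ≤ 2 := by
  refine (Finset.card_le_card_of_injOn (t := {j - 1, j}) Fin.val (fun c hc => ?_)
    Fin.val_injective.injOn).trans Finset.card_le_two
  have hc' : c.1 = j ∨ c.1 + 1 = j := by
    by_contra h
    exact (Finset.mem_filter.1 hc).2 (if_neg h)
  rw [Finset.mem_coe, Finset.mem_insert, Finset.mem_singleton]
  omega

lemma card_support_face_le (i j : ℕ) : Finset.card {m | face d i j m ≠ 0} ≤ 4 := by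
  rw [face, card_support_outer]
  exact Nat.mul_le_mul (card_support_domino_le i) (card_support_domino_le j)

lemma wt_le_four_of_mem_cssGenerators {s : PauliT (Fin d × Fin d)}
    (hs : s ∈ cssGenerators (rowFaces d 0) (colFaces d 0)) : wt s ≤ 4 := by
  rcases hs with ⟨_, ⟨i, j, -, -, -, -, rfl⟩, rfl⟩ | ⟨_, ⟨i, j, -, -, -, -, rfl⟩, rfl⟩
  · exact (wt_xString _).trans_le (card_support_face_le i j)
  · exact (wt_zString _).trans_le (card_support_face_le i j)

variable [NeZero d]

variable (d) in
/-- The first column of the grid, which supports a logical operator. -/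
def firstColumn : Fin d × Fin d → ZMod 2 := outer 1 (Pi.single 0 1)

lemma firstColumn_dotProduct_colFaces {e : ℕ} {g : Fin d × Fin d → ZMod 2}
    (hg : g ∈ colFaces d e) : firstColumn d ⬝ᵥ g = 0 := by
  obtain ⟨i, j, hi, hid, -, -, rfl⟩ := hg
  rw [firstColumn, face, outer_dotProduct_outer, one_dotProduct_domino hi hid, zero_mul]

lemma rowSum_firstColumn (r : Fin d) : rowSum r (firstColumn d) = 1 := by
  rw [firstColumn, rowSum_outer, dotProduct_single_one, Pi.one_apply, Pi.one_apply, one_mul]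

lemma card_support_firstColumn : Finset.card {m | firstColumn d m ≠ 0} = d := by
  rw [firstColumn, card_support_outer]
  simp [Pi.single_apply, Finset.filter_eq']

variable (d) in
/-- The commutation of a Pauli string with the two logical operators of `surfaceCode d`: `Z` along
the first row and `X` along the first column. -/
def logicalParities : PauliT (Fin d × Fin d) →ₗ[ZMod 2] ZMod 2 × ZMod 2 :=
  (rowSum 0 ∘ₗ xPart _).prod (rowSum 0 ∘ₗ (transpose d).toLinearMap ∘ₗ zPart _)

lemma mem_surfaceCode_iff_of_inDual {v : PauliT (Fin d × Fin d)}
    (hv : inDual (surfaceCode d) v) : v ∈ surfaceCode d ↔ logicalParities d v = 0 := by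
  obtain ⟨hx, hz⟩ := inDual_surfaceCode_iff.1 hv
  rw [mem_surfaceCode_iff, mem_span_rowFaces_iff hx 0, mem_span_rowFaces_iff hz 0,
    ← Prod.mk_eq_zero]
  rfl

lemma exists_inDual_logicalParities_eq (s : ZMod 2 × ZMod 2) :
    ∃ v, inDual (surfaceCode d) v ∧ logicalParities d v = s := by
  let v := xString _ (s.1 • firstColumn d) + zString _ (transpose d (s.2 • firstColumn d))
  have hx : xPart _ v = s.1 • firstColumn d := by
    rw [map_add, xPart_xString, xPart_zString, add_zero]
  have hz : transpose d (zPart _ v) = s.2 • firstColumn d := by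
    rw [map_add, zPart_xString, zPart_zString, zero_add]
    rfl
  refine ⟨v, inDual_surfaceCode_iff.2 ⟨fun g hg => ?_, fun g hg => ?_⟩, Prod.ext ?_ ?_⟩
  · rw [hx, smul_dotProduct, firstColumn_dotProduct_colFaces hg, smul_zero]
  · rw [hz, smul_dotProduct, firstColumn_dotProduct_colFaces hg, smul_zero]
  · change rowSum 0 (xPart _ v) = s.1
    rw [hx, map_smul, rowSum_firstColumn, smul_eq_mul, mul_one]
  · change rowSum 0 (transpose d (zPart _ v)) = s.2
    rw [hz, map_smul, rowSum_firstColumn, smul_eq_mul, mul_one]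

lemma distG_surfaceCode : distG (surfaceCode d) = d := by
  have hdual : inDual (surfaceCode d) (xString _ (firstColumn d)) := by
    refine inDual_surfaceCode_iff.2 ⟨fun g hg => firstColumn_dotProduct_colFaces hg, fun g _ => ?_⟩
    rw [zPart_xString, map_zero, zero_dotProduct]
  have hlogical : xString _ (firstColumn d) ∉ surfaceCode d := by
    rw [mem_surfaceCode_iff_of_inDual hdual]
    exact fun h => one_ne_zero ((rowSum_firstColumn 0).symm.trans (congrArg Prod.fst h))
  refine le_antisymm ((distG_le hdual hlogical).trans_eq ?_) (le_distG_iff.2 fun v hv hvG =>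
    Nat.cast_le.2 (le_wt_of_notMem_surfaceCode hv hvG))
  rw [wt_xString, card_support_firstColumn]

lemma finrank_surfaceCode_add_one :
    Module.finrank (ZMod 2) (surfaceCode d) + 1 = d * d := by
  let L := (logicalParities d).domRestrict (symplDual (surfaceCode d))
  have hker : LinearMap.ker L = (surfaceCode d).comap (symplDual (surfaceCode d)).subtype := by
    ext v
    exact (mem_surfaceCode_iff_of_inDual (mem_symplDual.1 v.2)).symm
  have hrange : LinearMap.range L = ⊤ := LinearMap.range_eq_top.2 fun s => by
    obtain ⟨v, hv, hs⟩ := exists_inDual_logicalParities_eq (d := d) s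
    exact ⟨⟨v, mem_symplDual.2 hv⟩, hs⟩
  have hle : surfaceCode d ≤ symplDual (surfaceCode d) := fun v hv =>
    mem_symplDual.2 (isStabilizer_surfaceCode d v hv)
  have hrank := L.finrank_range_add_finrank_ker
  rw [hrange, finrank_top, Module.finrank_prod, Module.finrank_self, hker,
    (Submodule.comapSubtypeEquivOfLe hle).finrank_eq] at hrank
  have hdual := finrank_symplDual_add_finrank (surfaceCode d)
  rw [Fintype.card_prod, Fintype.card_fin] at hdual
  omega

end SurfaceCode

lemma Wopt_mul_sq_le_four (k d : ℕ) [NeZero k] [NeZero d] : Wopt (k * d ^ 2) k d ≤ 4 := by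
  let e : Fin k × (Fin d × Fin d) ≃ Fin (k * d ^ 2) :=
    Fintype.equivOfCardEq (by simp only [Fintype.card_prod, Fintype.card_fin, sq])
  refine iInf₂_le_of_le (copies e (surfaceCode d)) ⟨(isStabilizer_surfaceCode d).copies, ?_,
    distG_copies.trans distG_surfaceCode⟩
      (Wgt_copies_span_le fun _ => wt_le_four_of_mem_cssGenerators)
  rw [finrank_copies, Fintype.card_fin, sq, ← finrank_surfaceCode_add_one, mul_add, mul_one,
    Nat.add_sub_cancel]

/-- for every `k ≥ 1` and finite `d ≥ 3`, `W_opt(n,k,d) ≥ 4` for all `n`,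
equality is attained at `n = k·d²`, and hence the minimum over all blocklengths is `4`. -/
theorem min_Wopt_distance_ge_three (k d : ℕ) (hk : 1 ≤ k) (hd : 3 ≤ d) :
    (∀ n : ℕ, 4 ≤ Wopt n k (d : ℕ∞)) ∧
    Wopt (k * d ^ 2) k (d : ℕ∞) = 4 ∧
    (⨅ n : ℕ, Wopt n k (d : ℕ∞)) = 4 := by
  have hge (n : ℕ) : 4 ≤ Wopt n k (d : ℕ∞) :=
    four_le_Wopt n k (by exact_mod_cast hd) (ENat.natCast_ne_top d)
  have : NeZero k := ⟨by omega⟩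
  have : NeZero d := ⟨by omega⟩
  have hle : Wopt (k * d ^ 2) k (d : ℕ∞) ≤ 4 := Wopt_mul_sq_le_four k d
  exact ⟨hge, le_antisymm hle (hge _), le_antisymm ((iInf_le _ _).trans hle) (le_iInf hge)⟩

end
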